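/- arXiv:math/9902052 — 2 statements merged into one kernel-verified Lean document; each statement's English description precedes it below -/
import Mathlib

section
/- Let 0 < p ≤ 1. There exists a constant C_p, depending only on n and p, such that for every p-atom a on S^{n-1}, the function A = P_h[a] satisfies ‖M[A]‖_{L^p(S^{n-1},σ)} ≤ C_p. -/
/-!
Write `N = n - 1` and `σ = sphMeasure n`. Since `σ` is a normalization of Hausdorff measure, it is
either `0` (when the claim is trivial) or a probability measure, so the finiteness and positivity
of the Hausdorff measure of the sphere never have to be established.

*Regularity of `σ`.* Reflections show that `σ(ball ξ r)` does not depend on the point `ξ` of the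
sphere, and Tonelli gives `∫ σ(ball x r) dx = vol(ball 0 r) ∼ r ^ n`. As `x ↦ σ(ball x r)` lives on
a shell of volume `∼ r` and is comparable there to the measure of a cap, caps of radius `r` have
measure `∼ r ^ N` (`sphMeasure_ball_le`, `le_sphMeasure_ball`). Summing over dyadic shells,
`∫ max(r, |ζ - ξ|) ^ (-s) dσ(ζ) ≲ r ^ (N - s)` for `s > N` (`lintegral_max_rpow`).

*Near the cap.* With `s = 2N` this bounds `∫ P_h(x, ·) dσ`, hence `P_h` on `L^∞` (`PhInt_le`); this
settles constant atoms, atoms on caps of radius `> 2`, and `ζ` within `2 r₀` of the centre `ξ₀`.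

*Away from the cap.* If `|ζ - ξ₀| ≥ 2 r₀`, the kernel `P_h(tζ, ·)` agrees on the cap with a smooth
function on `ℝⁿ` whose `k`-th derivative on the cap is `≲ |ζ - ξ₀| ^ (-(N + k))`, uniformly in `t`
(`exists_extension`), and the moment condition then gives a pointwise bound (`PhInt_far`).

Together, `M[A](ζ) ≲ σ(B) ^ (-1/p) (r₀ / max(r₀, |ζ - ξ₀|)) ^ (N + k)`, where `B` is the cap. The
hypothesis on `k` says exactly that `(N + k) p > N`, so the `p`-th power integrates to
`≲ r₀ ^ N / σ(B) ≲ 1`.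
-/


open MeasureTheory Metric Filter Topology Set
open scoped ContDiff ENNReal NNReal

noncomputable section

/-- `E n` is the Euclidean space `ℝⁿ`. -/
abbrev E (n : ℕ) := EuclideanSpace ℝ (Fin n)

/-- The normalized surface measure `σ` on the unit sphere `S^{n-1}` (total mass `1`). -/
noncomputable def sphMeasure (n : ℕ) : Measure (E n) :=
  ((μH[(n : ℝ) - 1] (sphere (0 : E n) 1))⁻¹) • ((μH[(n : ℝ) - 1]).restrict (sphere (0 : E n) 1))

/-- The Euclidean Laplacian `Δu(x) = Σ ∂²u/∂x_i²`. -/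
noncomputable def lap (n : ℕ) (u : E n → ℝ) (x : E n) : ℝ :=
  ∑ i : Fin n, fderiv ℝ (fun y => fderiv ℝ u y (EuclideanSpace.single i 1)) x (EuclideanSpace.single i 1)

/-- The normal derivation operator `Nu(x) = Σ x_i ∂u/∂x_i(x)`, i.e. the derivative of `u`
at `x` in the direction `x`. -/
noncomputable def Nder (n : ℕ) (u : E n → ℝ) (x : E n) : ℝ := fderiv ℝ u x x

/-- `u` is `H`-harmonic on `B_n` :
`Du(x) = (1-|x|²)²Δu(x) + 2(n-2)(1-|x|²)Nu(x) = 0` on the unit ball. -/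
def HHarmonic (n : ℕ) (u : E n → ℝ) : Prop :=
  ∀ x ∈ ball (0 : E n) 1,
    (1 - ‖x‖ ^ 2) ^ 2 * lap n u x + 2 * ((n : ℝ) - 2) * (1 - ‖x‖ ^ 2) * Nder n u x = 0

/-- The hyperbolic Poisson kernel `P_h(x,ξ) = ((1-|x|²)/|x-ξ|²)^{n-1}`. -/
noncomputable def Ph (n : ℕ) (x ξ : E n) : ℝ := ((1 - ‖x‖ ^ 2) / ‖x - ξ‖ ^ 2) ^ (n - 1)

/-- The Euclidean Poisson kernel `P_e(x,ξ) = (1-|x|²)/|x-ξ|ⁿ`. -/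
noncomputable def Pe (n : ℕ) (x ξ : E n) : ℝ := (1 - ‖x‖ ^ 2) / ‖x - ξ‖ ^ n

/-- `u` has a boundary distribution : for every smooth `Φ` on the sphere,
`∫ u(rζ)Φ(ζ)dσ(ζ)` has a finite limit as `r → 1⁻`. -/
def HasBoundaryDistribution (n : ℕ) (u : E n → ℝ) : Prop :=
  ∀ Φ : E n → ℝ, ContDiff ℝ ∞ Φ →
    ∃ L : ℝ, Tendsto (fun r : ℝ => ∫ ζ, u (r • ζ) * Φ ζ ∂(sphMeasure n)) (𝓝[<] (1 : ℝ)) (𝓝 L)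

/-- The radial maximal function `M[u](ζ) = sup_{0<t<1} |u(tζ)|`, valued in `ℝ≥0∞`. -/
noncomputable def radMax (n : ℕ) (u : E n → ℝ) (ζ : E n) : ℝ≥0∞ :=
  ⨆ t ∈ Ioo (0 : ℝ) 1, (‖u (t • ζ)‖₊ : ℝ≥0∞)

/-- The `L^p(S^{n-1},σ)` (quasi-)norm of the radial maximal function of `u`. -/
noncomputable def radMaxLp (n : ℕ) (p : ℝ) (u : E n → ℝ) : ℝ≥0∞ :=
  (∫⁻ ζ, radMax n u ζ ^ p ∂(sphMeasure n)) ^ (1 / p)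

/-- The hyperbolic Poisson integral `P_h[f](x) = ∫ P_h(x,ξ)f(ξ)dσ(ξ)`. -/
noncomputable def PhInt (n : ℕ) (f : E n → ℝ) (x : E n) : ℝ :=
  ∫ ξ, Ph n x ξ * f ξ ∂(sphMeasure n)

/-- A `p`-atom on `S^{n-1}` (with `k = k(p) > (n−1)(1/p−1)` moments) : either a constant
function (bounded by `σ(S^{n-1})^{-1/p} = 1`), or a measurable function supported in a
spherical cap `B̃(ξ₀,r₀)` with `|a| ≤ σ(B̃(ξ₀,r₀))^{-1/p}` a.e. and
`|∫ aΦ dσ| ≤ ‖∇^k Φ‖_{L^∞(B̃(ξ₀,r₀))} r₀^k σ(B̃(ξ₀,r₀))^{1−1/p}` for all smooth `Φ`. -/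
def IsPAtom (n : ℕ) (p : ℝ) (k : ℕ) (a : E n → ℝ) : Prop :=
  Measurable a ∧
    ((∃ c : ℝ, |c| ≤ 1 ∧ ∀ ξ ∈ sphere (0 : E n) 1, a ξ = c) ∨
      ∃ ξ₀ ∈ sphere (0 : E n) 1, ∃ r₀ : ℝ, 0 < r₀ ∧
        (∀ ξ ∈ sphere (0 : E n) 1, ξ ∉ ball ξ₀ r₀ → a ξ = 0) ∧
        (∀ᵐ ξ ∂(sphMeasure n),
          |a ξ| ≤ ((sphMeasure n) (ball ξ₀ r₀ ∩ sphere (0 : E n) 1)).toReal ^ (-(1 / p))) ∧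
        (∀ Φ : E n → ℝ, ContDiff ℝ ∞ Φ →
          |∫ ξ, a ξ * Φ ξ ∂(sphMeasure n)| ≤
            (⨆ x ∈ ball ξ₀ r₀ ∩ sphere (0 : E n) 1, ‖iteratedFDeriv ℝ k Φ x‖) * r₀ ^ k *
              ((sphMeasure n) (ball ξ₀ r₀ ∩ sphere (0 : E n) 1)).toReal ^ (1 - 1 / p)))

section Aux

/-! ### Regularity of the surface measure -/

/-- If the Hausdorff measure of the sphere is `0` or `⊤`, the normalization makes `sphMeasure`
vanish. -/
theorem sphMeasure_prob (n : ℕ) : sphMeasure n = 0 ∨ IsProbabilityMeasure (sphMeasure n) := by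
  by_cases h0 : μH[(n : ℝ) - 1] (sphere (0 : E n) 1) = 0
  · left
    simp [sphMeasure, Measure.restrict_eq_zero.2 h0]
  by_cases ht : μH[(n : ℝ) - 1] (sphere (0 : E n) 1) = ⊤
  · left
    simp [sphMeasure, ht]
  · right
    constructor
    simp [sphMeasure, ENNReal.inv_mul_cancel h0 ht]

theorem sphMeasure_ae (n : ℕ) : ∀ᵐ ξ ∂(sphMeasure n), ξ ∈ sphere (0 : E n) 1 :=
  Measure.ae_smul_measure (ae_restrict_mem isClosed_sphere.measurableSet) _

theorem sphMeasure_inter (n : ℕ) (s : Set (E n)) :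
    sphMeasure n (s ∩ sphere (0 : E n) 1) = sphMeasure n s := by
  apply measure_congr
  filter_upwards [sphMeasure_ae n] with x hx
  exact propext ⟨fun h => h.1, fun h => ⟨h, hx⟩⟩

/-- Caps of equal radius have equal measure: a reflection swaps their centres and, being an
isometry, preserves Hausdorff measure. -/
theorem sphMeasure_ball_eq (n : ℕ) {x y : E n} (h : ‖x‖ = ‖y‖) (r : ℝ) :
    sphMeasure n (ball x r) = sphMeasure n (ball y r) := by
  have key := Submodule.reflection_sub h
  set R := (Submodule.span ℝ {x - y})ᗮ.reflection with hR
  have him : R.toIsometryEquiv '' (ball x r ∩ sphere 0 1) = ball y r ∩ sphere (0 : E n) 1 := by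
    rw [Set.image_inter R.toIsometryEquiv.injective]
    congr 1
    · simp [key]
    · simp
  have := R.toIsometryEquiv.hausdorffMeasure_image ((n : ℝ) - 1) (ball x r ∩ sphere 0 1)
  rw [him] at this
  simp [sphMeasure, Measure.restrict_apply measurableSet_ball, this]

/-- Tonelli: averaging the measure of balls over Lebesgue-distributed centres. -/
theorem lintegral_sphMeasure_ball (n : ℕ) [IsProbabilityMeasure (sphMeasure n)] (r : ℝ) :
    ∫⁻ x : E n, sphMeasure n (ball x r) = volume (ball (0 : E n) r) := by
  have hs : MeasurableSet {q : E n × E n | dist q.2 q.1 < r} :=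
    (isOpen_lt (by fun_prop) (by fun_prop)).measurableSet
  have h1 := Measure.prod_apply (μ := (volume : Measure (E n))) (ν := sphMeasure n) hs
  have h2 := Measure.prod_apply_symm (μ := (volume : Measure (E n))) (ν := sphMeasure n) hs
  rw [h1] at h2
  have h3 : ∀ ξ : E n, (fun x : E n => (x, ξ)) ⁻¹' {q : E n × E n | dist q.2 q.1 < r} = ball ξ r := by
    intro ξ; ext x; simp [dist_comm]
  have h4 : ∀ x : E n, Prod.mk x ⁻¹' {q : E n × E n | dist q.2 q.1 < r} = ball x r := by
    intro ξ; ext x; simp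
  simp only [h3, h4, Measure.addHaar_ball_center, lintegral_const, measure_univ, mul_one] at h2
  exact h2

theorem pow_diff_le (n : ℕ) {r : ℝ} (h0 : 0 ≤ r) (h1 : r ≤ 1) :
    (1 + r) ^ n - (1 - r) ^ n ≤ 2 * 3 ^ n * r := by
  have a : (1 + r) ^ n ≤ 1 + 3 ^ n * r := by
    induction n with
    | zero => simp [h0]
    | succ n ih =>
      have h3 : (1 : ℝ) ≤ 3 ^ n := one_le_pow₀ (by norm_num)
      have : (1 + r) ^ (n + 1) ≤ (1 + 3 ^ n * r) * (1 + r) := by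
        rw [pow_succ]; gcongr
      have h4 : (3 : ℝ) ^ n * r * r ≤ 3 ^ n * r * 1 := by gcongr
      rw [pow_succ (3 : ℝ)]
      nlinarith
  have b : 1 - 3 ^ n * r ≤ (1 - r) ^ n := by
    have := one_add_mul_le_pow (a := -r) (by linarith) n
    have h3 : (n : ℝ) ≤ 3 ^ n := by exact_mod_cast (Nat.lt_pow_self (by norm_num)).le
    have : (n : ℝ) * r ≤ 3 ^ n * r := by gcongr
    rw [← sub_eq_add_neg] at *
    linarith
  linarith

theorem nontrivial_E (n : ℕ) (hn : 3 ≤ n) : Nontrivial (E n) := by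
  have : Nonempty (Fin n) := ⟨⟨0, by omega⟩⟩
  infer_instance

theorem volume_shell (n : ℕ) (hn : 3 ≤ n) {s t : ℝ} (hs : 0 ≤ s) (hst : s ≤ t) :
    volume (ball (0 : E n) t \ ball 0 s) =
      ENNReal.ofReal (t ^ n - s ^ n) * volume (ball (0 : E n) 1) := by
  have := nontrivial_E n hn
  rw [measure_sdiff (ball_subset_ball hst) measurableSet_ball.nullMeasurableSet
    measure_ball_lt_top.ne, Measure.addHaar_ball _ _ hs, Measure.addHaar_ball _ _ (hs.trans hst),
    ENNReal.ofReal_sub _ (by positivity), ENNReal.sub_mul]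
  · simp
  · intros; exact measure_ball_lt_top.ne

theorem norm_normalize_sub (n : ℕ) {x : E n} (hx : x ≠ 0) :
    ‖x - ‖x‖⁻¹ • x‖ = |‖x‖ - 1| := by
  have h : ‖x‖ ≠ 0 := norm_ne_zero_iff.2 hx
  have : x - ‖x‖⁻¹ • x = (1 - ‖x‖⁻¹) • x := by rw [sub_smul, one_smul]
  rw [this, norm_smul, Real.norm_eq_abs]
  nth_rewrite 2 [← abs_norm x]
  rw [← abs_mul]
  congr 1
  field_simp

/-- Upper Ahlfors regularity: `ball x (2r)` contains a cap of radius `r` whenever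
`1 ≤ |x| < 1 + r`, a shell of volume at least a multiple of `r`. -/
theorem sphMeasure_ball_le (n : ℕ) (hn : 3 ≤ n) [IsProbabilityMeasure (sphMeasure n)]
    {ξ : E n} (hξ : ‖ξ‖ = 1) {r : ℝ} (hr : 0 < r) :
    sphMeasure n (ball ξ r) ≤ ENNReal.ofReal (2 ^ n * r ^ (n - 1)) := by
  rcases le_or_gt r 1 with h1 | h1
  swap
  · calc sphMeasure n (ball ξ r) ≤ 1 := prob_le_one
      _ = ENNReal.ofReal 1 := by simp
      _ ≤ _ := ENNReal.ofReal_le_ofReal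
        (one_le_mul_of_one_le_of_one_le (one_le_pow₀ (by norm_num)) (one_le_pow₀ h1.le))
  have := nontrivial_E n hn
  set A : Set (E n) := ball 0 (1 + r) \ ball 0 1 with hA
  have hAm : MeasurableSet A := measurableSet_ball.diff measurableSet_ball
  have hpt : ∀ x : E n, A.indicator (fun _ => sphMeasure n (ball ξ r)) x ≤
      sphMeasure n (ball x (2 * r)) := by
    intro x
    by_cases hx : x ∈ A
    · rw [Set.indicator_of_mem hx]
      simp only [hA, Set.mem_sdiff, mem_ball_zero_iff, not_lt] at hx
      have hx0 : x ≠ 0 := by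
        rintro rfl; simp at hx; linarith [hx.2]
      have hn1 : ‖‖x‖⁻¹ • x‖ = 1 := norm_smul_inv_norm (𝕜 := ℝ) hx0
      rw [sphMeasure_ball_eq n (hξ.trans hn1.symm) r]
      apply measure_mono
      apply ball_subset_ball'
      rw [dist_comm, dist_eq_norm, norm_normalize_sub n hx0, abs_of_nonneg (by linarith)]
      linarith
    · rw [Set.indicator_of_notMem hx]; exact zero_le
  have hint := lintegral_mono (μ := (volume : Measure (E n))) hpt
  rw [lintegral_sphMeasure_ball, lintegral_indicator_const hAm, hA,
    volume_shell n hn (by norm_num) (by linarith), Measure.addHaar_ball volume (0 : E n) (by positivity : 0 ≤ 2 * r),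
    ← mul_assoc, ENNReal.mul_le_mul_iff_left (measure_ball_pos _ _ one_pos).ne'
      measure_ball_lt_top.ne, finrank_euclideanSpace_fin] at hint
  have hm : sphMeasure n (ball ξ r) = ENNReal.ofReal (sphMeasure n (ball ξ r)).toReal :=
    (ENNReal.ofReal_toReal (measure_ne_top _ _)).symm
  set m := (sphMeasure n (ball ξ r)).toReal with hmdef
  have hm0 : 0 ≤ m := ENNReal.toReal_nonneg
  rw [hm] at hint ⊢
  rw [← ENNReal.ofReal_mul hm0, ENNReal.ofReal_le_ofReal_iff (by positivity)] at hint
  apply ENNReal.ofReal_le_ofReal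
  have hb := one_add_mul_le_pow (a := r) (by linarith) n
  have hn1 : (1 : ℝ) ≤ n := by exact_mod_cast (by omega : 1 ≤ n)
  have h2 : m * r ≤ (2 ^ n * r ^ (n - 1)) * r := by
    calc m * r ≤ m * ((1 + r) ^ n - 1 ^ n) := by
          gcongr
          simp only [one_pow]
          nlinarith
      _ ≤ (2 * r) ^ n := hint
      _ = _ := by rw [mul_assoc, ← pow_succ, Nat.sub_add_cancel (by omega), mul_pow]
  exact le_of_mul_le_mul_right h2 hr

/-- Lower Ahlfors regularity: `ball x t` meets the sphere only for `x` in a shell of volume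
at most a multiple of `t`, and then in a subset of a cap of radius `2t`. -/
theorem le_sphMeasure_ball (n : ℕ) (hn : 3 ≤ n) [IsProbabilityMeasure (sphMeasure n)]
    {ξ : E n} (hξ : ‖ξ‖ = 1) {r : ℝ} (hr : 0 < r) (hr2 : r ≤ 2) :
    ENNReal.ofReal ((12 ^ n)⁻¹ * r ^ (n - 1)) ≤ sphMeasure n (ball ξ r) := by
  have := nontrivial_E n hn
  obtain ⟨t, rfl⟩ : ∃ t, r = 2 * t := ⟨r / 2, by ring⟩
  have ht : 0 < t := by linarith
  have ht1 : t ≤ 1 := by linarith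
  set A : Set (E n) := ball 0 (1 + t) \ ball 0 (1 - t) with hA
  have hAm : MeasurableSet A := measurableSet_ball.diff measurableSet_ball
  have hzero : ∀ x : E n, t ≤ |‖x‖ - 1| → sphMeasure n (ball x t) = 0 := by
    intro x hx
    rw [← sphMeasure_inter]
    convert measure_empty (μ := sphMeasure n)
    ext y
    simp only [mem_inter_iff, mem_ball, mem_sphere_iff_norm, sub_zero, mem_empty_iff_false,
      iff_false, not_and]
    intro h1 h2
    have := abs_norm_sub_norm_le x y
    rw [h2, ← dist_eq_norm, dist_comm] at this
    linarith
  have hpt : ∀ x : E n, sphMeasure n (ball x t) ≤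
      A.indicator (fun _ => sphMeasure n (ball ξ (2 * t))) x := by
    intro x
    by_cases hx0 : t ≤ |‖x‖ - 1|
    · rw [hzero x hx0]; exact zero_le
    push Not at hx0
    have hab := abs_lt.1 hx0
    have hx : x ∈ A := by
      simp only [hA, Set.mem_sdiff, mem_ball_zero_iff, not_lt]
      constructor <;> linarith
    rw [Set.indicator_of_mem hx]
    have hxn : x ≠ 0 := by
      rintro rfl; simp at hx0; linarith
    have hn1 : ‖‖x‖⁻¹ • x‖ = 1 := norm_smul_inv_norm (𝕜 := ℝ) hxn
    rw [sphMeasure_ball_eq n (hξ.trans hn1.symm) (2 * t)]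
    apply measure_mono
    apply ball_subset_ball'
    rw [dist_eq_norm, norm_normalize_sub n hxn]
    linarith
  have hint := lintegral_mono (μ := (volume : Measure (E n))) hpt
  rw [lintegral_sphMeasure_ball, lintegral_indicator_const hAm, hA,
    volume_shell n hn (by linarith) (by linarith), Measure.addHaar_ball volume (0 : E n) ht.le,
    ← mul_assoc, ENNReal.mul_le_mul_iff_left (measure_ball_pos _ _ one_pos).ne'
      measure_ball_lt_top.ne, finrank_euclideanSpace_fin] at hint
  have hm : sphMeasure n (ball ξ (2 * t)) =
      ENNReal.ofReal (sphMeasure n (ball ξ (2 * t))).toReal :=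
    (ENNReal.ofReal_toReal (measure_ne_top _ _)).symm
  set m := (sphMeasure n (ball ξ (2 * t))).toReal with hmdef
  have hm0 : 0 ≤ m := ENNReal.toReal_nonneg
  have hd := pow_diff_le n ht.le ht1
  have hd0 : 0 ≤ (1 + t) ^ n - (1 - t) ^ n :=
    sub_nonneg.2 (pow_le_pow_left₀ (by linarith) (by linarith) n)
  rw [hm] at hint ⊢
  rw [← ENNReal.ofReal_mul hm0, ENNReal.ofReal_le_ofReal_iff (by positivity)] at hint
  apply ENNReal.ofReal_le_ofReal
  have hpow : t ^ n = t ^ (n - 1) * t := by rw [← pow_succ, Nat.sub_add_cancel (by omega)]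
  have h2 : t ^ (n - 1) ≤ m * (2 * 3 ^ n) := by
    apply le_of_mul_le_mul_right _ ht
    rw [← hpow]
    calc t ^ n ≤ m * ((1 + t) ^ n - (1 - t) ^ n) := hint
      _ ≤ m * (2 * 3 ^ n * t) := by gcongr
      _ = _ := by ring
  have h12 : (12 : ℝ) ^ n = 2 ^ (n - 1) * (2 * 3 ^ n) * 2 ^ n := by
    have : (2 : ℝ) ^ (n - 1) * 2 = 2 ^ n := by rw [← pow_succ, Nat.sub_add_cancel (by omega)]
    rw [← mul_assoc, this, ← mul_pow, ← mul_pow]; norm_num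
  rw [inv_mul_le_iff₀ (by positivity), mul_pow, h12]
  have h1 : (1 : ℝ) ≤ 2 ^ n := one_le_pow₀ (by norm_num)
  calc (2 : ℝ) ^ (n - 1) * t ^ (n - 1) ≤ 2 ^ (n - 1) * (m * (2 * 3 ^ n)) := by gcongr
    _ = 2 ^ (n - 1) * (2 * 3 ^ n) * 1 * m := by ring
    _ ≤ _ := by gcongr

/-! ### Smooth extension of the kernel -/

theorem one_sub_le_norm (n : ℕ) {ζ ξ : E n} (hζ : ‖ζ‖ = 1) (hξ : ‖ξ‖ = 1) {t : ℝ}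
    (ht : t ∈ Ioo (0 : ℝ) 1) : 1 - t ≤ ‖t • ζ - ξ‖ := by
  have := norm_sub_norm_le ξ (t • ζ)
  rwa [norm_smul, hζ, hξ, Real.norm_eq_abs, abs_of_pos ht.1, mul_one, norm_sub_rev] at this

theorem norm_smul_sub_self (n : ℕ) {ζ : E n} (hζ : ‖ζ‖ = 1) {t : ℝ}
    (ht : t ∈ Ioo (0 : ℝ) 1) : ‖t • ζ - ζ‖ = 1 - t := by
  have h : t • ζ - ζ = (t - 1) • ζ := by rw [sub_smul, one_smul]
  rw [h, norm_smul, hζ, mul_one, Real.norm_eq_abs, abs_of_neg (by linarith [ht.2])]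
  ring

theorem norm_sub_le_two_mul (n : ℕ) {ζ ξ : E n} (hζ : ‖ζ‖ = 1) (hξ : ‖ξ‖ = 1) {t : ℝ}
    (ht : t ∈ Ioo (0 : ℝ) 1) : ‖ξ - ζ‖ ≤ 2 * ‖t • ζ - ξ‖ := by
  have h1 := one_sub_le_norm n hζ hξ ht
  have h2 := norm_sub_le_norm_sub_add_norm_sub ξ (t • ζ) ζ
  rw [norm_smul_sub_self n hζ ht, norm_sub_rev ξ (t • ζ)] at h2
  linarith

/-- A globally smooth function agreeing with `y ↦ ‖y‖ ^ (-2N)` off the unit ball: the squared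
norm is kept away from zero near the origin by adding a smooth bump. -/
def kerModel (n N : ℕ) (y : E n) : ℝ :=
  ((‖y‖ ^ 2 + Real.smoothTransition (1 - ‖y‖ ^ 2))⁻¹) ^ N

theorem kerModel_eq (n N : ℕ) {y : E n} (hy : 1 ≤ ‖y‖) : kerModel n N y = ((‖y‖ ^ 2)⁻¹) ^ N := by
  rw [kerModel, Real.smoothTransition.zero_of_nonpos, add_zero]
  nlinarith

theorem kerModel_contDiff (n N : ℕ) : ContDiff ℝ ∞ (kerModel n N) := by
  unfold kerModel
  refine ContDiff.pow (ContDiff.inv ?_ ?_) _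
  · refine (contDiff_norm_sq ℝ).add ?_
    exact Real.smoothTransition.contDiff.comp (contDiff_const.sub (contDiff_norm_sq ℝ))
  · intro y
    rcases eq_or_ne y 0 with rfl | h
    · simp [Real.smoothTransition.one]
    · have : 0 < ‖y‖ ^ 2 := by positivity
      have := Real.smoothTransition.nonneg (1 - ‖y‖ ^ 2)
      positivity

/-- For `ζ` far from the cap, the kernel restricted to the cap is a rescaled copy of `kerModel`
at the scale `ρ ∼ |ζ - ξ₀| + (1 - t)`; since `(ξ - tζ)/ρ` stays in a fixed compact set, each
derivative costs a factor `ρ⁻¹`. -/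
theorem exists_extension (n k : ℕ) : ∃ C : ℝ, 0 < C ∧ ∀ (ζ ξ₀ : E n) (r₀ t : ℝ),
    ‖ζ‖ = 1 → ‖ξ₀‖ = 1 → 0 < r₀ → 2 * r₀ ≤ ‖ζ - ξ₀‖ → t ∈ Ioo (0 : ℝ) 1 →
    ∃ Φ : E n → ℝ, ContDiff ℝ ∞ Φ ∧ ∀ ξ, ‖ξ‖ = 1 → ξ ∈ ball ξ₀ r₀ →
      Φ ξ = Ph n (t • ζ) ξ ∧ ‖iteratedFDeriv ℝ k Φ ξ‖ ≤ C * (‖ζ - ξ₀‖⁻¹) ^ (n - 1 + k) := by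
  set N := n - 1 with hN
  have hsm := kerModel_contDiff n N
  have hcont : Continuous (iteratedFDeriv ℝ k (kerModel n N)) :=
    hsm.continuous_iteratedFDeriv (by exact_mod_cast le_top)
  obtain ⟨B, hB⟩ := (isCompact_closedBall (0 : E n) 12).exists_bound_of_continuousOn
    hcont.continuousOn
  have hB0 : 0 ≤ B := (norm_nonneg _).trans (hB 0 (by simp))
  refine ⟨16 ^ N * 8 ^ (N + k) * (B + 1), by positivity, ?_⟩
  intro ζ ξ₀ r₀ t hζ hξ₀ hr₀ hfar ht
  set d := ‖ζ - ξ₀‖ with hd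
  have hd0 : 0 < d := by linarith
  set δ := 1 - t with hδ
  have hδ0 : 0 < δ := by linarith [ht.2]
  set ρ := (d + δ) / 8 with hρ
  have hρ0 : 0 < ρ := by positivity
  set L : E n →L[ℝ] E n := ρ⁻¹ • ContinuousLinearMap.id ℝ (E n) with hL
  set v : E n := ρ⁻¹ • t • ζ with hv
  set G : E n → ℝ := fun y => kerModel n N (y - v) with hG
  have hGs : ContDiff ℝ ∞ G := hsm.comp (contDiff_id.sub contDiff_const)
  have hGL : ContDiff ℝ ∞ (G ∘ L) := hGs.comp L.contDiff
  set c : ℝ := (1 - t ^ 2) ^ N * ((ρ ^ 2)⁻¹) ^ N with hc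
  have h1t : 0 ≤ 1 - t ^ 2 := by nlinarith [ht.1, ht.2]
  have hc0 : 0 ≤ c := by positivity
  refine ⟨fun ξ => c • (G ∘ L) ξ, hGL.const_smul c, ?_⟩
  intro ξ hξ hξb
  have hLv : L ξ - v = ρ⁻¹ • (ξ - t • ζ) := by
    simp [hL, hv, smul_sub]
  have hlow1 := one_sub_le_norm n hζ hξ ht
  have hlow2 := norm_sub_le_two_mul n hζ hξ ht
  rw [mem_ball_iff_norm] at hξb
  have htri : d ≤ ‖ξ - ζ‖ + ‖ξ - ξ₀‖ := by
    rw [norm_sub_rev ξ ζ]; exact norm_sub_le_norm_sub_add_norm_sub _ _ _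
  have hup : ‖t • ζ - ξ‖ ≤ δ + (d + r₀) := by
    have h2 := norm_sub_le_norm_sub_add_norm_sub (t • ζ) ζ ξ
    have h3 := norm_sub_le_norm_sub_add_norm_sub ζ ξ₀ ξ
    rw [norm_smul_sub_self n hζ ht] at h2
    rw [norm_sub_rev ξ₀] at h3
    linarith
  have hnorm : ‖L ξ - v‖ = ‖t • ζ - ξ‖ / ρ := by
    rw [hLv, norm_smul, Real.norm_eq_abs, abs_of_pos (by positivity), norm_sub_rev,
      inv_mul_eq_div]
  have hge : 1 ≤ ‖L ξ - v‖ := by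
    rw [hnorm, le_div_iff₀ hρ0, hρ]; linarith
  have hle : ‖L ξ - v‖ ≤ 12 := by
    rw [hnorm, div_le_iff₀ hρ0, hρ]; linarith
  constructor
  · have htz : ‖t • ζ‖ = t := by
      rw [norm_smul, hζ, Real.norm_eq_abs, abs_of_pos ht.1, mul_one]
    simp only [smul_eq_mul, Function.comp, hG]
    rw [kerModel_eq n N hge, hnorm, hc, Ph, htz, ← hN, ← mul_pow, ← mul_pow]
    congr 1
    field_simp
  · have hcd : ContDiffAt ℝ k (G ∘ L) ξ :=
      (hGL.of_le (by exact_mod_cast le_top)).contDiffAt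
    have e1 : iteratedFDeriv ℝ k (fun ξ => c • (G ∘ L) ξ) ξ = c • iteratedFDeriv ℝ k (G ∘ L) ξ :=
      iteratedFDeriv_const_smul_apply' hcd
    rw [e1, norm_smul, Real.norm_eq_abs, abs_of_nonneg hc0,
      L.iteratedFDeriv_comp_right (i := k) hGs ξ (by exact_mod_cast le_top)]
    have e2 : iteratedFDeriv ℝ k G (L ξ) = iteratedFDeriv ℝ k (kerModel n N) (L ξ - v) :=
      iteratedFDeriv_comp_sub k v (L ξ)
    have hLn : ‖L‖ ≤ ρ⁻¹ := by
      refine L.opNorm_le_bound (by positivity) fun x => ?_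
      simp [hL, norm_smul, abs_of_pos hρ0]
    have e3 : ‖(iteratedFDeriv ℝ k G (L ξ)).compContinuousLinearMap fun _ => L‖ ≤
        B * (ρ⁻¹) ^ k := by
      refine (ContinuousMultilinearMap.norm_compContinuousLinearMap_le _ _).trans ?_
      rw [Finset.prod_const, Finset.card_univ, Fintype.card_fin, e2]
      gcongr
      exact hB _ (by simpa using hle)
    have e4 : (1 - t ^ 2) ≤ 16 * ρ := by
      have h1 := ht.1
      have h2 := ht.2
      rw [hρ]; nlinarith
    have e5 : ρ⁻¹ ≤ 8 * d⁻¹ := by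
      rw [inv_le_comm₀ hρ0 (by positivity), mul_inv, inv_inv, hρ]; linarith
    calc c * ‖(iteratedFDeriv ℝ k G (L ξ)).compContinuousLinearMap fun _ => L‖
        ≤ ((16 * ρ) ^ N * ((ρ ^ 2)⁻¹) ^ N) * (B * (ρ⁻¹) ^ k) := by
          rw [hc]; gcongr
      _ = 16 ^ N * B * (ρ⁻¹) ^ (N + k) := by
          have : (16 * ρ) ^ N * ((ρ ^ 2)⁻¹) ^ N = 16 ^ N * ρ⁻¹ ^ N := by
            rw [← mul_pow, ← mul_pow]; congr 1; field_simp
          rw [this, pow_add]; ring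
      _ ≤ 16 ^ N * (B + 1) * (8 * d⁻¹) ^ (N + k) := by gcongr; linarith
      _ = _ := by rw [mul_pow]; ring

/-! ### Kernel integrals -/

/-- Summing the upper regularity over dyadic shells. -/
theorem lintegral_max_rpow (n : ℕ) (hn : 3 ≤ n) [IsProbabilityMeasure (sphMeasure n)] {s : ℝ}
    (hs : (n : ℝ) - 1 < s) : ∃ C : ℝ, 0 < C ∧ ∀ (ξ : E n) (r : ℝ), ‖ξ‖ = 1 → 0 < r →
      ∫⁻ ζ, ENNReal.ofReal ((max r ‖ζ - ξ‖) ^ (-s)) ∂(sphMeasure n) ≤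
        ENNReal.ofReal (C * r ^ ((n : ℝ) - 1 - s)) := by
  have hn1 : (1 : ℝ) ≤ n := by exact_mod_cast (by omega : 1 ≤ n)
  set q : ℝ := 2 ^ ((n : ℝ) - 1 - s) with hq
  have hq0 : 0 < q := by positivity
  have hq1 : q < 1 := Real.rpow_lt_one_of_one_lt_of_neg (by norm_num) (by linarith)
  have hq2 : 0 < (1 - q)⁻¹ := inv_pos.2 (by linarith)
  refine ⟨2 ^ n * 2 ^ s * (1 - q)⁻¹, by positivity, ?_⟩
  intro ξ r hξ hr
  have hpt : ∀ ζ : E n, ENNReal.ofReal ((max r ‖ζ - ξ‖) ^ (-s)) ≤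
      ∑' j : ℕ, (ball ξ (2 ^ j * r)).indicator
        (fun _ => ENNReal.ofReal ((2 ^ j * r / 2) ^ (-s))) ζ := by
    intro ζ
    have hex : ∃ j : ℕ, ‖ζ - ξ‖ < 2 ^ j * r := by
      obtain ⟨j, hj⟩ := pow_unbounded_of_one_lt (‖ζ - ξ‖ / r) (one_lt_two (α := ℝ))
      exact ⟨j, (div_lt_iff₀ hr).1 hj⟩
    classical
    -- The least such `j`: minimality gives `2 ^ j * r / 2 ≤ max r ‖ζ - ξ‖`.
    set j := Nat.find hex with hj
    have hjs : ‖ζ - ξ‖ < 2 ^ j * r := Nat.find_spec hex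
    refine le_trans ?_ (ENNReal.le_tsum j)
    rw [Set.indicator_of_mem (mem_ball_iff_norm.2 hjs)]
    apply ENNReal.ofReal_le_ofReal
    apply Real.rpow_le_rpow_of_nonpos (by positivity) _ (by linarith)
    rcases Nat.eq_zero_or_pos j with h0 | h0
    · rw [h0]; exact le_max_of_le_left (by linarith)
    · have := Nat.find_min hex (Nat.sub_lt h0 one_pos)
      push Not at this
      refine le_max_of_le_right (le_trans (le_of_eq ?_) this)
      have h2 : (2 : ℝ) ^ j = 2 ^ (j - 1) * 2 := by rw [← pow_succ, Nat.sub_add_cancel h0]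
      rw [← hj, h2]; ring
  refine (lintegral_mono hpt).trans ?_
  rw [lintegral_tsum fun j => (measurable_const.indicator measurableSet_ball).aemeasurable]
  have hterm : ∀ j : ℕ, ∫⁻ ζ, (ball ξ (2 ^ j * r)).indicator
        (fun _ => ENNReal.ofReal ((2 ^ j * r / 2) ^ (-s))) ζ ∂(sphMeasure n) ≤
      ENNReal.ofReal (2 ^ n * 2 ^ s * r ^ ((n : ℝ) - 1 - s) * q ^ j) := by
    intro j
    rw [lintegral_indicator_const measurableSet_ball]
    have hR : 0 < 2 ^ j * r := by positivity
    refine (mul_le_mul_right (sphMeasure_ball_le n hn hξ hR) _).trans ?_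
    rw [← ENNReal.ofReal_mul (by positivity)]
    apply ENNReal.ofReal_le_ofReal
    apply le_of_eq
    have e1 : (2 ^ j * r : ℝ) ^ (n - 1) = (2 ^ j * r) ^ ((n : ℝ) - 1) := by
      rw [← Real.rpow_natCast, Nat.cast_sub (by omega), Nat.cast_one]
    have e2 : q ^ j = ((2 : ℝ) ^ j) ^ ((n : ℝ) - 1 - s) := by
      rw [hq, ← Real.rpow_natCast, ← Real.rpow_natCast, ← Real.rpow_mul (by norm_num),
        ← Real.rpow_mul (by norm_num), mul_comm]
    have e3 : (2 ^ j * r / 2 : ℝ) ^ (-s) = (2 ^ j * r) ^ (-s) * 2 ^ s := by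
      rw [Real.div_rpow hR.le (by norm_num), Real.rpow_neg (by norm_num : (0 : ℝ) ≤ 2),
        div_inv_eq_mul]
    have e4 : (2 ^ j * r : ℝ) ^ (-s) * (2 ^ j * r) ^ ((n : ℝ) - 1) =
        ((2 : ℝ) ^ j) ^ ((n : ℝ) - 1 - s) * r ^ ((n : ℝ) - 1 - s) := by
      rw [← Real.rpow_add hR, ← Real.mul_rpow (by positivity) hr.le]; congr 1; ring
    rw [e1, e2, e3]
    linear_combination (2 ^ s * 2 ^ n) * e4
  refine (ENNReal.tsum_le_tsum hterm).trans ?_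
  rw [← ENNReal.ofReal_tsum_of_nonneg (fun j => by positivity)
    ((summable_geometric_of_lt_one hq0.le hq1).mul_left _), tsum_mul_left,
    tsum_geometric_of_lt_one hq0.le hq1]
  apply ENNReal.ofReal_le_ofReal
  apply le_of_eq; ring

theorem Ph_nonneg (n : ℕ) {ζ ξ : E n} (hζ : ‖ζ‖ = 1) {t : ℝ} (ht : t ∈ Ioo (0 : ℝ) 1) :
    0 ≤ Ph n (t • ζ) ξ := by
  have htz : ‖t • ζ‖ = t := by
    rw [norm_smul, hζ, Real.norm_eq_abs, abs_of_pos ht.1, mul_one]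
  have h1t : 0 ≤ 1 - t ^ 2 := by nlinarith [ht.1, ht.2]
  rw [Ph, htz]; positivity

theorem Ph_le (n : ℕ) (hn : 3 ≤ n) {ζ ξ : E n} (hζ : ‖ζ‖ = 1) (hξ : ‖ξ‖ = 1) {t : ℝ}
    (ht : t ∈ Ioo (0 : ℝ) 1) : Ph n (t • ζ) ξ ≤
      8 ^ (n - 1) * (1 - t) ^ (n - 1) * (max (1 - t) ‖ξ - ζ‖) ^ (-(2 * ((n : ℝ) - 1))) := by
  have htz : ‖t • ζ‖ = t := by
    rw [norm_smul, hζ, Real.norm_eq_abs, abs_of_pos ht.1, mul_one]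
  have h1 := ht.1
  have h2 := ht.2
  have h1t : 0 ≤ 1 - t ^ 2 := by nlinarith
  set m := max (1 - t) ‖ξ - ζ‖ with hm
  have hm0 : 0 < m := lt_max_of_lt_left (by linarith)
  have hml : m / 2 ≤ ‖t • ζ - ξ‖ := by
    have := max_le (by linarith [one_sub_le_norm n hζ hξ ht] : 1 - t ≤ 2 * ‖t • ζ - ξ‖)
      (norm_sub_le_two_mul n hζ hξ ht)
    linarith
  have e : m ^ (-(2 * ((n : ℝ) - 1))) = ((m ^ 2)⁻¹) ^ (n - 1) := by
    rw [inv_pow, ← pow_mul, Real.rpow_neg hm0.le, ← Real.rpow_natCast]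
    congr 2
    push_cast [Nat.cast_sub (by omega : 1 ≤ n)]
    ring
  rw [Ph, htz, e, ← mul_pow, ← mul_pow]
  refine pow_le_pow_left₀ (by positivity) ?_ _
  calc (1 - t ^ 2) / ‖t • ζ - ξ‖ ^ 2 ≤ (2 * (1 - t)) / (m / 2) ^ 2 := by
        gcongr
        nlinarith
    _ = _ := by field_simp; ring

/-- The hyperbolic Poisson integral is bounded on `L^∞`. -/
theorem PhInt_le (n : ℕ) (hn : 3 ≤ n) [IsProbabilityMeasure (sphMeasure n)] :
    ∃ C : ℝ, 0 < C ∧ ∀ (a : E n → ℝ) (M : ℝ), 0 ≤ M → (∀ᵐ ξ ∂(sphMeasure n), |a ξ| ≤ M) →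
      ∀ (ζ : E n) (t : ℝ), ‖ζ‖ = 1 → t ∈ Ioo (0 : ℝ) 1 → |PhInt n a (t • ζ)| ≤ C * M := by
  have hn1 : (3 : ℝ) ≤ n := by exact_mod_cast hn
  obtain ⟨C, hC, hI⟩ := lintegral_max_rpow n hn (s := 2 * ((n : ℝ) - 1)) (by linarith)
  refine ⟨8 ^ (n - 1) * C, by positivity, ?_⟩
  intro a M hM ha ζ t hζ ht
  have hδ : 0 < 1 - t := by linarith [ht.2]
  have key : ‖PhInt n a (t • ζ)‖ₑ ≤ ENNReal.ofReal (8 ^ (n - 1) * C * M) := by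
    refine (enorm_integral_le_lintegral_enorm _).trans ?_
    have hpt : ∀ᵐ ξ ∂(sphMeasure n), ‖Ph n (t • ζ) ξ * a ξ‖ₑ ≤
        ENNReal.ofReal (M * (8 ^ (n - 1) * (1 - t) ^ (n - 1))) *
          ENNReal.ofReal ((max (1 - t) ‖ξ - ζ‖) ^ (-(2 * ((n : ℝ) - 1)))) := by
      filter_upwards [ha, sphMeasure_ae n] with ξ h1 h2
      rw [← ENNReal.ofReal_mul (by positivity), ← ofReal_norm, norm_mul,
        Real.norm_eq_abs, Real.norm_eq_abs, abs_of_nonneg (Ph_nonneg n hζ ht)]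
      apply ENNReal.ofReal_le_ofReal
      have h3 := Ph_le n hn hζ (mem_sphere_zero_iff_norm.1 h2) ht
      calc Ph n (t • ζ) ξ * |a ξ| ≤ _ * M := mul_le_mul h3 h1 (abs_nonneg _)
            ((Ph_nonneg n hζ ht).trans h3)
        _ = _ := by ring
    refine (lintegral_mono_ae hpt).trans ?_
    rw [lintegral_const_mul' _ _ ENNReal.ofReal_ne_top]
    refine (mul_le_mul_right (hI ζ (1 - t) hζ hδ) _).trans ?_
    rw [← ENNReal.ofReal_mul (by positivity)]
    apply ENNReal.ofReal_le_ofReal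
    apply le_of_eq
    have e : (1 - t) ^ (n - 1) * (1 - t) ^ ((n : ℝ) - 1 - 2 * ((n : ℝ) - 1)) = 1 := by
      rw [← Real.rpow_natCast, ← Real.rpow_add hδ, Nat.cast_sub (by omega : 1 ≤ n)]
      convert Real.rpow_zero (1 - t) using 2
      push_cast; ring
    linear_combination (M * 8 ^ (n - 1) * C) * e
  rwa [← ofReal_norm, ENNReal.ofReal_le_ofReal_iff (by positivity)] at key

/-! ### The maximal function -/

theorem radMax_le (n : ℕ) {u : E n → ℝ} {ζ : E n} {b : ℝ}
    (h : ∀ t ∈ Ioo (0 : ℝ) 1, |u (t • ζ)| ≤ b) : radMax n u ζ ≤ ENNReal.ofReal b := by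
  refine iSup₂_le fun t ht => ?_
  have : ‖u (t • ζ)‖ₑ ≤ ENNReal.ofReal b := by
    rw [← ofReal_norm]
    exact ENNReal.ofReal_le_ofReal (h t ht)
  exact this

theorem radMaxLp_le_of_bounded (n : ℕ) [IsProbabilityMeasure (sphMeasure n)] {p : ℝ} (hp : 0 < p)
    {u : E n → ℝ} {b : ℝ}
    (h : ∀ (ζ : E n) (t : ℝ), ‖ζ‖ = 1 → t ∈ Ioo (0 : ℝ) 1 → |u (t • ζ)| ≤ b) :
    radMaxLp n p u ≤ ENNReal.ofReal b := by
  have h1 : ∫⁻ ζ, radMax n u ζ ^ p ∂(sphMeasure n) ≤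
      ∫⁻ _, ENNReal.ofReal b ^ p ∂(sphMeasure n) := by
    apply lintegral_mono_ae
    filter_upwards [sphMeasure_ae n] with ζ hζ
    exact ENNReal.rpow_le_rpow
      (radMax_le n fun t ht => h ζ t (mem_sphere_zero_iff_norm.1 hζ) ht) hp.le
  rw [lintegral_const, measure_univ, mul_one] at h1
  calc radMaxLp n p u ≤ (ENNReal.ofReal b ^ p) ^ (1 / p) :=
        ENNReal.rpow_le_rpow h1 (by positivity)
    _ = _ := by rw [← ENNReal.rpow_mul, mul_one_div_cancel hp.ne', ENNReal.rpow_one]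

/-- Decay away from the cap, from the moment condition tested against the smooth extension of
the kernel. -/
theorem PhInt_far (n k : ℕ) : ∃ C : ℝ, 0 < C ∧ ∀ (a : E n → ℝ) (ζ ξ₀ : E n) (r₀ t A : ℝ),
    ‖ζ‖ = 1 → ‖ξ₀‖ = 1 → 0 < r₀ → 2 * r₀ ≤ ‖ζ - ξ₀‖ → t ∈ Ioo (0 : ℝ) 1 → 0 ≤ A →
    (∀ ξ ∈ sphere (0 : E n) 1, ξ ∉ ball ξ₀ r₀ → a ξ = 0) →
    (∀ Φ : E n → ℝ, ContDiff ℝ ∞ Φ → |∫ ξ, a ξ * Φ ξ ∂(sphMeasure n)| ≤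
      (⨆ x ∈ ball ξ₀ r₀ ∩ sphere (0 : E n) 1, ‖iteratedFDeriv ℝ k Φ x‖) * r₀ ^ k * A) →
    |PhInt n a (t • ζ)| ≤ C * (‖ζ - ξ₀‖⁻¹) ^ (n - 1 + k) * r₀ ^ k * A := by
  obtain ⟨C, hC, hext⟩ := exists_extension n k
  refine ⟨C, hC, ?_⟩
  intro a ζ ξ₀ r₀ t A hζ hξ₀ hr₀ hfar ht hA hsupp hmom
  obtain ⟨Φ, hΦ, hprop⟩ := hext ζ ξ₀ r₀ t hζ hξ₀ hr₀ hfar ht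
  have heq : PhInt n a (t • ζ) = ∫ ξ, a ξ * Φ ξ ∂(sphMeasure n) := by
    refine integral_congr_ae ?_
    filter_upwards [sphMeasure_ae n] with ξ hξ
    by_cases hb : ξ ∈ ball ξ₀ r₀
    · rw [(hprop ξ (mem_sphere_zero_iff_norm.1 hξ) hb).1, mul_comm]
    · rw [hsupp ξ hξ hb]; simp
  rw [heq]
  refine (hmom Φ hΦ).trans ?_
  gcongr
  have h0 : 0 ≤ C * (‖ζ - ξ₀‖⁻¹) ^ (n - 1 + k) := by positivity
  exact Real.iSup_le (fun ξ => Real.iSup_le (fun hξ =>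
    (hprop ξ (mem_sphere_zero_iff_norm.1 hξ.2) hξ.1).2) h0) h0

end Aux

/-- For `0 < p ≤ 1` there is a constant `C_p = C(n,p)` such that for every
`p`-atom `a` on `S^{n-1}`, `A = P_h[a]` satisfies `‖M[A]‖_{L^p(S^{n-1},σ)} ≤ C_p`. -/
theorem stmt17 (n : ℕ) (hn : 3 ≤ n) (p : ℝ) (hp0 : 0 < p) (hp1 : p ≤ 1)
    (k : ℕ) (hk : ((n : ℝ) - 1) * (1 / p - 1) < (k : ℝ)) :
    ∃ C : ℝ, 0 < C ∧ ∀ a : E n → ℝ, IsPAtom n p k a →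
      radMaxLp n p (PhInt n a) ≤ ENNReal.ofReal C := by
  rcases sphMeasure_prob n with h0 | hprob
  · refine ⟨1, one_pos, fun a _ => ?_⟩
    simp [radMaxLp, h0, hp0]
  obtain ⟨C₀, hC₀, hbdd⟩ := PhInt_le n hn
  obtain ⟨C₁, hC₁, hfar⟩ := PhInt_far n k
  have hn1 : ((n - 1 : ℕ) : ℝ) = (n : ℝ) - 1 := by
    rw [Nat.cast_sub (by omega), Nat.cast_one]
  set N := n - 1 with hN
  set s : ℝ := ((N + k : ℕ) : ℝ) * p with hs_def
  have hs : (n : ℝ) - 1 < s := by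
    have h1 : ((n : ℝ) - 1) * (1 / p - 1) * p < k * p := mul_lt_mul_of_pos_right hk hp0
    have h2 : ((n : ℝ) - 1) * (1 / p - 1) * p = ((n : ℝ) - 1) * (1 - p) := by
      field_simp
    rw [hs_def, Nat.cast_add, hn1]
    nlinarith
  obtain ⟨C₂, hC₂, hint⟩ := lintegral_max_rpow n hn hs
  set D : ℝ := C₀ * 2 ^ (N + k) + C₁ * 2 ^ n with hD
  have hD0 : 0 < D := by positivity
  set T : ℝ := D ^ p * C₂ * 12 ^ n with hT
  have hT0 : 0 < T := by positivity
  refine ⟨C₀ + T ^ (1 / p), by positivity, ?_⟩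
  have hC₀le : ENNReal.ofReal C₀ ≤ ENNReal.ofReal (C₀ + T ^ (1 / p)) :=
    ENNReal.ofReal_le_ofReal (le_add_of_nonneg_right (by positivity))
  rintro a ⟨-, ⟨c, hc, hac⟩ | ⟨ξ₀, hξ₀, r₀, hr₀, hsupp, hsize, hmom⟩⟩
  · refine (radMaxLp_le_of_bounded n hp0 fun ζ t hζ ht => ?_).trans hC₀le
    have := hbdd a 1 zero_le_one
      (by filter_upwards [sphMeasure_ae n] with ξ hξ using by rw [hac ξ hξ]; exact hc) ζ t hζ ht
    rwa [mul_one] at this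
  rw [mem_sphere_zero_iff_norm] at hξ₀
  rw [sphMeasure_inter] at hsize hmom
  set m := (sphMeasure n (ball ξ₀ r₀)).toReal with hm
  have hm_eq : sphMeasure n (ball ξ₀ r₀) = ENNReal.ofReal m :=
    (ENNReal.ofReal_toReal (measure_ne_top _ _)).symm
  have hm0 : 0 ≤ m := ENNReal.toReal_nonneg
  rcases lt_or_ge 2 r₀ with hbig | hr2
  · -- The cap is the whole sphere, so its measure is `1`.
    have hm1 : m = 1 := by
      rw [hm, ← ENNReal.toReal_one]
      congr 1
      rw [prob_compl_eq_zero_iff measurableSet_ball |>.1]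
      refine measure_mono_null ?_ (ae_iff.1 (sphMeasure_ae n))
      intro ξ hξ hξs
      refine hξ (mem_ball_iff_norm.2 ((norm_sub_le _ _).trans_lt ?_))
      rw [hξ₀, mem_sphere_zero_iff_norm.1 hξs]
      linarith
    refine (radMaxLp_le_of_bounded n hp0 fun ζ t hζ ht => ?_).trans hC₀le
    have := hbdd a 1 zero_le_one (by simpa [hm1] using hsize) ζ t hζ ht
    rwa [mul_one] at this
  have hup : m ≤ 2 ^ n * r₀ ^ N := by
    have := sphMeasure_ball_le n hn hξ₀ hr₀
    rwa [hm_eq, ENNReal.ofReal_le_ofReal_iff (by positivity)] at this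
  have hlow : r₀ ^ N ≤ 12 ^ n * m := by
    have := le_sphMeasure_ball n hn hξ₀ hr₀ hr2
    rwa [hm_eq, ENNReal.ofReal_le_ofReal_iff hm0, inv_mul_le_iff₀ (by positivity)] at this
  have hmpos : 0 < m := by
    have : 0 < 12 ^ n * m := lt_of_lt_of_le (by positivity) hlow
    exact pos_of_mul_pos_right this (by positivity)
  have hpt : ∀ ζ : E n, ‖ζ‖ = 1 → ∀ t ∈ Ioo (0 : ℝ) 1, |PhInt n a (t • ζ)| ≤
      D * m ^ (-(1 / p)) * (r₀ * (max r₀ ‖ζ - ξ₀‖)⁻¹) ^ (N + k) := by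
    intro ζ hζ t ht
    rcases lt_or_ge ‖ζ - ξ₀‖ (2 * r₀) with hnear | hdist
    · -- Here `r₀ / max(r₀, |ζ - ξ₀|) ≥ 1/2`, so the `L^∞` bound suffices.
      have h1 : 1 ≤ 2 * (r₀ * (max r₀ ‖ζ - ξ₀‖)⁻¹) := by
        rw [← mul_assoc, ← div_eq_mul_inv, le_div_iff₀ (lt_max_of_lt_left hr₀), one_mul]
        exact max_le (by linarith) hnear.le
      have h2 : 1 ≤ 2 ^ (N + k) * (r₀ * (max r₀ ‖ζ - ξ₀‖)⁻¹) ^ (N + k) := by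
        rw [← mul_pow]; exact one_le_pow₀ h1
      calc |PhInt n a (t • ζ)| ≤ C₀ * m ^ (-(1 / p)) :=
            hbdd a _ (by positivity) hsize ζ t hζ ht
        _ ≤ C₀ * m ^ (-(1 / p)) * (2 ^ (N + k) * (r₀ * (max r₀ ‖ζ - ξ₀‖)⁻¹) ^ (N + k)) :=
            le_mul_of_one_le_right (by positivity) h2
        _ = C₀ * 2 ^ (N + k) * m ^ (-(1 / p)) * (r₀ * (max r₀ ‖ζ - ξ₀‖)⁻¹) ^ (N + k) := by ring
        _ ≤ _ := by
            gcongr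
            exact le_add_of_nonneg_right (by positivity)
    · have hmax : max r₀ ‖ζ - ξ₀‖ = ‖ζ - ξ₀‖ := max_eq_right (by linarith)
      have hmp : m ^ (1 - 1 / p) = m * m ^ (-(1 / p)) := by
        rw [sub_eq_add_neg, Real.rpow_add hmpos, Real.rpow_one]
      rw [hmax]
      calc |PhInt n a (t • ζ)|
          ≤ C₁ * (‖ζ - ξ₀‖⁻¹) ^ (N + k) * r₀ ^ k * m ^ (1 - 1 / p) :=
            hfar a ζ ξ₀ r₀ t _ hζ hξ₀ hr₀ hdist ht (by positivity) hsupp hmom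
        _ = C₁ * (‖ζ - ξ₀‖⁻¹) ^ (N + k) * r₀ ^ k * m ^ (-(1 / p)) * m := by rw [hmp]; ring
        _ ≤ C₁ * (‖ζ - ξ₀‖⁻¹) ^ (N + k) * r₀ ^ k * m ^ (-(1 / p)) * (2 ^ n * r₀ ^ N) := by
            gcongr
        _ = C₁ * 2 ^ n * m ^ (-(1 / p)) * (r₀ * ‖ζ - ξ₀‖⁻¹) ^ (N + k) := by
            rw [mul_pow, pow_add r₀]; ring
        _ ≤ _ := by
            gcongr
            exact le_add_of_nonneg_left (by positivity)
  have hLp : ∫⁻ ζ, radMax n (PhInt n a) ζ ^ p ∂(sphMeasure n) ≤ ENNReal.ofReal T := by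
    have hpt2 : ∀ᵐ ζ ∂(sphMeasure n), radMax n (PhInt n a) ζ ^ p ≤
        ENNReal.ofReal (D ^ p * m⁻¹ * r₀ ^ s) *
          ENNReal.ofReal ((max r₀ ‖ζ - ξ₀‖) ^ (-s)) := by
      filter_upwards [sphMeasure_ae n] with ζ hζ
      have hx : 0 < max r₀ ‖ζ - ξ₀‖ := lt_max_of_lt_left hr₀
      refine (ENNReal.rpow_le_rpow
        (radMax_le n (hpt ζ (mem_sphere_zero_iff_norm.1 hζ))) hp0.le).trans ?_
      rw [ENNReal.ofReal_rpow_of_nonneg (by positivity) hp0.le,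
        ← ENNReal.ofReal_mul (by positivity)]
      apply ENNReal.ofReal_le_ofReal
      rw [Real.mul_rpow (by positivity) (by positivity), Real.mul_rpow hD0.le (by positivity),
        ← Real.rpow_mul hm0, ← Real.rpow_natCast, ← Real.rpow_mul (by positivity),
        Real.mul_rpow hr₀.le (by positivity), Real.inv_rpow hx.le, ← hs_def,
        neg_mul, one_div_mul_cancel hp0.ne', Real.rpow_neg_one, Real.rpow_neg hx.le, mul_assoc,
        mul_assoc, mul_assoc]
    refine (lintegral_mono_ae hpt2).trans ?_
    rw [lintegral_const_mul' _ _ ENNReal.ofReal_ne_top]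
    refine (mul_le_mul_right (hint ξ₀ r₀ hξ₀ hr₀) _).trans ?_
    rw [← ENNReal.ofReal_mul (by positivity)]
    apply ENNReal.ofReal_le_ofReal
    have e : r₀ ^ s * r₀ ^ ((n : ℝ) - 1 - s) = r₀ ^ N := by
      rw [← Real.rpow_add hr₀, ← Real.rpow_natCast, hn1]; congr 1; ring
    calc D ^ p * m⁻¹ * r₀ ^ s * (C₂ * r₀ ^ ((n : ℝ) - 1 - s))
        = D ^ p * C₂ * (m⁻¹ * (r₀ ^ s * r₀ ^ ((n : ℝ) - 1 - s))) := by ring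
      _ ≤ D ^ p * C₂ * 12 ^ n := by
          rw [e]
          gcongr
          rw [inv_mul_le_iff₀ hmpos, mul_comm]
          exact hlow
  calc radMaxLp n p (PhInt n a) ≤ ENNReal.ofReal T ^ (1 / p) :=
        ENNReal.rpow_le_rpow hLp (by positivity)
    _ = ENNReal.ofReal (T ^ (1 / p)) := ENNReal.ofReal_rpow_of_nonneg hT0.le (by positivity)
    _ ≤ _ := ENNReal.ofReal_le_ofReal (le_add_of_nonneg_left hC₀.le)
end
end

section
/- Let 0 < p ≤ 1, let (a_j)_{j≥1} be a sequence of p-atoms on S^{n-1} and (λ_j)_{j≥1} a sequence of reals with Σ_j |λ_j|^p < ∞. Then the series Σ_j λ_j P_h[a_j] converges uniformly on compact subsets of B_n to an H-harmonic function u, and there is a constant C_p, depending only on n and p, such that ‖M[u]‖_{L^p(S^{n-1},σ)}^p ≤ C_p^p Σ_j |λ_j|^p. -/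
/-!
Write `n = m + 1`. Every atom satisfies, with one constant `A`, either `|a| ≤ A`, or the size bound
`|a| ≤ A r^{-m/p}` and the moment condition at a cap of radius `r ≤ 1` (`AtomAlt`); this uses that
`σ` of a cap of radius `r ≤ 1` is comparable to `r^m`, which is proved by projecting pieces of the
sphere orthogonally to a coordinate axis.

*Maximal function of one atom* (`exists_radMax_majorant`). Since `∫ P_h(x,ξ) dσ(ξ)` is bounded,
`M[P_h[a]] ≲ r^{-m/p}` everywhere, which is enough on the cap of radius `2r`. Away from it, the
moment condition applied to `Φ = P_h(tζ,·)`, whose `k`-th derivatives on the cap of radius `r` are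
`O(|ζ-ξ₀|^{-m-k})`, gives
`M[P_h[a]](ζ) ≲ r^{k+m-m/p} |ζ-ξ₀|^{-m-k}`. As `p(m+k) > m`, the `p`-th power of this bound is
integrable off the cap, uniformly in `r`. The kernel being singular on the diagonal, `Φ` is built
from a function that is smooth on all of space and equals `|y|^{-2m}` off a small ball.

*Convergence and `H`-harmonicity.* Against a fixed smooth kernel `H`, the integrals
`∫ H(x-ξ) a(ξ) dσ(ξ)` are bounded uniformly over all atoms (`exists_abs_sphConv_le`), because
`k + m - m/p > 0`. As `|λ_j|` is summable, `Σ_j λ_j ∫ H(x-ξ) a_j(ξ) dσ(ξ)` can be differentiated term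
by term, each derivative falling on `H` (`AtomSeq.fderiv_apply`). On a smaller ball the series
`Σ_j λ_j P_h[a_j]` is `(1-|x|²)^m` times such a series with `H = |y|^{-2m}` off a small ball, and the
equation reduces to the one for the kernel (`kernel_identity`).

*Maximal function of the sum.* For `p ≤ 1` the `p`-th power is countably subadditive, so
`∫ M[u]^p ≤ Σ_j |λ_j|^p ∫ M[P_h[a_j]]^p`.
-/

open MeasureTheory Metric Filter Topology Set
open scoped ContDiff ENNReal NNReal

noncomputable section

/-! ### The measure of spherical caps -/

/-- The linear map forgetting the `i`-th coordinate, with values in `Fin m → ℝ` (sup norm), where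
`m`-dimensional Hausdorff measure is Lebesgue measure. -/
def dropCoord {m : ℕ} (i : Fin (m + 1)) (x : E (m + 1)) : Fin m → ℝ := fun j => x (i.succAbove j)

/-- The part of the unit sphere on which the `i`-th coordinate has the sign of `s` (for `s = ±1`)
and is bounded away from zero. -/
def sphPiece (m : ℕ) (i : Fin (m + 1)) (s : ℝ) : Set (E (m + 1)) :=
  {x | x ∈ sphere (0 : E (m + 1)) 1 ∧ 1 ≤ (m + 1) * (s * x i)}

lemma mem_sphere_iff_sum {n : ℕ} (x : E n) : x ∈ sphere (0 : E n) 1 ↔ ∑ i, x i ^ 2 = 1 := by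
  rw [mem_sphere_zero_iff_norm, ← EuclideanSpace.real_norm_sq_eq]
  constructor
  · intro h; rw [h]; norm_num
  · intro h
    have := norm_nonneg x
    nlinarith

lemma abs_coord_le_norm {n : ℕ} (x : E n) (i : Fin n) : |x i| ≤ ‖x‖ := by
  simpa using PiLp.norm_apply_le x i

lemma dist_le_sum_coord {n : ℕ} (x y : E n) : dist x y ≤ ∑ i, |x i - y i| := by
  rw [dist_eq_norm]
  have h : x - y = ∑ i, (x i - y i) • EuclideanSpace.single i (1 : ℝ) := by
    ext j
    simp [Finset.sum_apply, Pi.single_apply]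
  rw [h]
  refine (norm_sum_le _ _).trans (Finset.sum_le_sum fun i _ => ?_)
  rw [norm_smul]; simp

lemma dropCoord_lipschitz {m : ℕ} (i : Fin (m + 1)) : LipschitzWith 1 (dropCoord i) := by
  refine LipschitzWith.of_dist_le_mul fun x y => ?_
  rw [NNReal.coe_one, one_mul, dist_pi_le_iff dist_nonneg]
  intro j
  rw [Real.dist_eq, dist_eq_norm]
  exact abs_coord_le_norm (x - y) (i.succAbove j)

/-- On each piece the sphere is a Lipschitz graph over the coordinate hyperplane. -/
lemma dist_le_of_mem_sphPiece {m : ℕ} {i : Fin (m + 1)} {s : ℝ} (hs : |s| = 1) {x y : E (m + 1)}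
    (hx : x ∈ sphPiece m i s) (hy : y ∈ sphPiece m i s) :
    dist x y ≤ (m * (m + 2)) * dist (dropCoord i x) (dropCoord i y) := by
  obtain ⟨hx1, hx2⟩ := hx
  obtain ⟨hy1, hy2⟩ := hy
  set d := dist (dropCoord i x) (dropCoord i y) with hd
  have hj : ∀ j, |x (i.succAbove j) - y (i.succAbove j)| ≤ d := fun j => by
    have := dist_le_pi_dist (dropCoord i x) (dropCoord i y) j
    rwa [Real.dist_eq] at this
  have hxn : ∀ l, |x l| ≤ 1 := fun l => (abs_coord_le_norm x l).trans (by simpa using hx1.le)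
  have hyn : ∀ l, |y l| ≤ 1 := fun l => (abs_coord_le_norm y l).trans (by simpa using hy1.le)
  have hsum : ∀ z : E (m + 1), z ∈ sphere (0 : E (m + 1)) 1 →
      z i ^ 2 + ∑ j, z (i.succAbove j) ^ 2 = 1 := fun z hz => by
    rw [← Fin.sum_univ_succAbove (fun l => z l ^ 2) i]; exact (mem_sphere_iff_sum z).1 hz
  have h1 := hsum x hx1
  have h2 := hsum y hy1
  have hdiff : |x i ^ 2 - y i ^ 2| ≤ 2 * m * d := by
    have : x i ^ 2 - y i ^ 2 = ∑ j, (y (i.succAbove j) ^ 2 - x (i.succAbove j) ^ 2) := by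
      rw [Finset.sum_sub_distrib]; linarith
    rw [this]
    refine (Finset.abs_sum_le_sum_abs _ _).trans ?_
    have : ∀ j ∈ (Finset.univ : Finset (Fin m)),
        |y (i.succAbove j) ^ 2 - x (i.succAbove j) ^ 2| ≤ 2 * d := fun j _ => by
      have e : y (i.succAbove j) ^ 2 - x (i.succAbove j) ^ 2 =
        -((x (i.succAbove j) - y (i.succAbove j)) * (x (i.succAbove j) + y (i.succAbove j))) := by
        ring
      rw [e, abs_neg, abs_mul, mul_comm]
      have h3 := (abs_add_le (x (i.succAbove j)) (y (i.succAbove j)))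
      have h4 := hxn (i.succAbove j)
      have h5 := hyn (i.succAbove j)
      exact mul_le_mul (by linarith) (hj j) (abs_nonneg _) (by norm_num)
    refine (Finset.sum_le_sum this).trans ?_
    simp; linarith
  have hm : (0 : ℝ) < m + 1 := by positivity
  have hi : |x i - y i| ≤ m * (m + 1) * d := by
    have h6 : 2 ≤ (m + 1) * |x i + y i| := by
      have : s * (x i + y i) ≤ |x i + y i| := by
        refine (le_abs_self _).trans ?_
        rw [abs_mul, hs, one_mul]
      nlinarith
    have e : x i ^ 2 - y i ^ 2 = (x i - y i) * (x i + y i) := by ring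
    rw [e, abs_mul] at hdiff
    have h7 := mul_le_mul_of_nonneg_left hdiff hm.le
    have h8 := mul_le_mul_of_nonneg_left h6 (abs_nonneg (x i - y i))
    nlinarith
  refine (dist_le_sum_coord x y).trans ?_
  rw [Fin.sum_univ_succAbove _ i]
  have : ∑ j, |x (i.succAbove j) - y (i.succAbove j)| ≤ m * d := by
    refine (Finset.sum_le_sum fun j _ => hj j).trans ?_
    simp
  nlinarith

lemma hausdorff_pi (m : ℕ) : (μH[(m : ℝ)] : Measure (Fin m → ℝ)) = volume := by
  have := hausdorffMeasure_pi_real (ι := Fin m)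
  rwa [Fintype.card_fin] at this

lemma sphPiece_cap_le {m : ℕ} {i : Fin (m + 1)} {s : ℝ} (hs : |s| = 1) (z : E (m + 1)) {r : ℝ}
    (hr : 0 < r) :
    μH[(m : ℝ)] (ball z r ∩ sphPiece m i s) ≤
      ENNReal.ofReal (((m * (m + 2) : ℝ)) ^ m * (2 * r) ^ m) := by
  set A := ball z r ∩ sphPiece m i s
  have hinj : InjOn (dropCoord i) A := fun x hx y hy hxy => by
    have := dist_le_of_mem_sphPiece hs hx.2 hy.2
    rw [hxy, dist_self, mul_zero] at this
    exact dist_le_zero.1 this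
  set g := Function.invFunOn (dropCoord i) A
  have hg : ∀ x ∈ A, g (dropCoord i x) = x := fun x hx => hinj.leftInvOn_invFunOn hx
  have hA : A = g '' (dropCoord i '' A) := by
    ext x; constructor
    · intro hx; exact ⟨_, ⟨x, hx, rfl⟩, hg x hx⟩
    · rintro ⟨_, ⟨y, hy, rfl⟩, rfl⟩; rw [hg y hy]; exact hy
  have hlip : LipschitzOnWith (m * (m + 2) : ℕ) g (dropCoord i '' A) := by
    refine LipschitzOnWith.of_dist_le_mul ?_
    rintro _ ⟨x, hx, rfl⟩ _ ⟨y, hy, rfl⟩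
    rw [hg x hx, hg y hy]
    simpa using dist_le_of_mem_sphPiece hs hx.2 hy.2
  have hsub : dropCoord i '' A ⊆ ball (dropCoord i z) r := by
    rintro _ ⟨x, hx, rfl⟩
    have := (dropCoord_lipschitz i).dist_le_mul x z
    rw [mem_ball]
    have h2 : dist x z < r := hx.1
    simp at this; linarith
  rw [hA]
  refine (hlip.hausdorffMeasure_image_le (by positivity)).trans ?_
  rw [hausdorff_pi]
  refine (mul_le_mul_right (measure_mono hsub) _).trans ?_
  rw [Real.volume_pi_ball _ hr, ENNReal.ofReal_mul (by positivity), Fintype.card_fin,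
    ENNReal.rpow_natCast]
  refine le_of_eq ?_
  congr 1
  rw [ENNReal.ofReal_pow (by positivity)]
  congr 1
  rw [ENNReal.coe_natCast, ← ENNReal.ofReal_natCast]
  push_cast
  rfl

/-- Every point of the sphere has a coordinate of size at least `1/(m+1)`. -/
lemma exists_sphPiece {m : ℕ} {x : E (m + 1)} (hx : x ∈ sphere (0 : E (m + 1)) 1) :
    ∃ i : Fin (m + 1), 1 ≤ (m + 1) * x i ^ 2 ∧ 1 ≤ (m + 1) * |x i| := by
  have h := (mem_sphere_iff_sum x).1 hx
  obtain ⟨i, hi⟩ : ∃ i, 1 ≤ (m + 1) * x i ^ 2 := by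
    by_contra! hcon
    have : ∑ i, ((m : ℝ) + 1) * x i ^ 2 < ∑ i : Fin (m + 1), (1 : ℝ) :=
      Finset.sum_lt_sum_of_nonempty Finset.univ_nonempty fun i _ => hcon i
    rw [← Finset.mul_sum, h] at this
    simp at this
  refine ⟨i, hi, ?_⟩
  have h1 : |x i| ≤ 1 := (abs_coord_le_norm x i).trans (by simpa using hx.le)
  have h2 : x i ^ 2 ≤ |x i| := by
    rw [← sq_abs]; nlinarith [abs_nonneg (x i)]
  have hm : (0 : ℝ) < m + 1 := by positivity
  nlinarith

/-- Upper Ahlfors regularity of the unnormalized surface measure on spherical caps. -/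
lemma hausdorff_cap_le (m : ℕ) : ∃ A : ℝ, 0 < A ∧ ∀ (z : E (m + 1)) (r : ℝ), 0 < r →
    μH[(m : ℝ)] (ball z r ∩ sphere (0 : E (m + 1)) 1) ≤ ENNReal.ofReal (A * r ^ m) := by
  refine ⟨(m + 1) * (2 * (((m * (m + 2) : ℝ)) ^ m * 2 ^ m)) + 1, by positivity, fun z r hr => ?_⟩
  set B := ENNReal.ofReal (((m * (m + 2) : ℝ)) ^ m * (2 * r) ^ m) with hB
  have hcov : ball z r ∩ sphere (0 : E (m + 1)) 1 ⊆
      ⋃ i : Fin (m + 1), (ball z r ∩ sphPiece m i 1) ∪ (ball z r ∩ sphPiece m i (-1)) := by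
    rintro x ⟨hx1, hx2⟩
    obtain ⟨i, -, hi⟩ := exists_sphPiece hx2
    refine mem_iUnion.2 ⟨i, ?_⟩
    rcases le_total 0 (x i) with h | h
    · left; refine ⟨hx1, hx2, ?_⟩
      rwa [abs_of_nonneg h, ← one_mul (x i)] at hi
    · right; refine ⟨hx1, hx2, ?_⟩
      rwa [abs_of_nonpos h, ← neg_one_mul (x i)] at hi
  refine (measure_mono hcov).trans ((measure_iUnion_le _).trans ?_)
  rw [tsum_fintype]
  refine (Finset.sum_le_sum fun i _ => (measure_union_le _ _).trans (add_le_add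
    (sphPiece_cap_le (by simp) z hr) (sphPiece_cap_le (by simp) z hr))).trans ?_
  rw [Finset.sum_const, Finset.card_univ, Fintype.card_fin, ← ENNReal.ofReal_add (by positivity)
    (by positivity), ← ENNReal.ofReal_nsmul]
  refine ENNReal.ofReal_le_ofReal ?_
  rw [nsmul_eq_mul, mul_pow 2 r m]
  push_cast
  nlinarith [pow_pos hr m]

/-- Lower regularity: the projection of a cap of radius `r` contains a ball of radius
comparable to `r`. -/
lemma le_hausdorff_cap (m : ℕ) : ∃ c : ℝ, 0 < c ∧ ∀ ξ ∈ sphere (0 : E (m + 1)) 1, ∀ r : ℝ, 0 < r →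
    r ≤ 1 → ENNReal.ofReal (c * r ^ m) ≤ μH[(m : ℝ)] (ball ξ r ∩ sphere (0 : E (m + 1)) 1) := by
  set κ : ℝ := 1 / (4 * (m + 1) ^ 2) with hκ
  have hκ0 : 0 < κ := by positivity
  have hκ1 : κ * (4 * (m + 1) ^ 2) = 1 := by rw [hκ]; field_simp
  have hm0 : (0 : ℝ) ≤ m := by positivity
  have hκ2 : κ ≤ 1 := by nlinarith [mul_nonneg hκ0.le hm0, mul_nonneg hκ0.le (sq_nonneg (m : ℝ))]
  refine ⟨(2 * κ) ^ m, by positivity, fun ξ hξ r hr hr1 => ?_⟩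
  obtain ⟨i, hi1, hi2⟩ := exists_sphPiece hξ
  have hξn : ∀ l, |ξ l| ≤ 1 := fun l => (abs_coord_le_norm ξ l).trans (by simpa using hξ.le)
  have hξs : ξ i ^ 2 + ∑ j, ξ (i.succAbove j) ^ 2 = 1 := by
    rw [← Fin.sum_univ_succAbove (fun l => ξ l ^ 2) i]; exact (mem_sphere_iff_sum ξ).1 hξ
  have hsub : ball (dropCoord i ξ) (κ * r) ⊆
      dropCoord i '' (ball ξ r ∩ sphere (0 : E (m + 1)) 1) := by
    intro w hw
    set S := ∑ j, w j ^ 2 with hS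
    have hwj : ∀ j, |w j - ξ (i.succAbove j)| ≤ κ * r := fun j => by
      have := (dist_le_pi_dist w (dropCoord i ξ) j).trans (le_of_lt hw)
      rwa [Real.dist_eq] at this
    have hκr : κ * r ≤ 1 := by nlinarith
    have hSd : |S - ∑ j, ξ (i.succAbove j) ^ 2| ≤ 3 * m * (κ * r) := by
      rw [hS, ← Finset.sum_sub_distrib]
      refine (Finset.abs_sum_le_sum_abs _ _).trans ?_
      have : ∀ j ∈ (Finset.univ : Finset (Fin m)),
          |w j ^ 2 - ξ (i.succAbove j) ^ 2| ≤ 3 * (κ * r) := fun j _ => by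
        have e : w j ^ 2 - ξ (i.succAbove j) ^ 2 =
          ((w j - ξ (i.succAbove j)) + 2 * ξ (i.succAbove j)) * (w j - ξ (i.succAbove j)) := by ring
        rw [e, abs_mul]
        have h3 := abs_add_le (w j - ξ (i.succAbove j)) (2 * ξ (i.succAbove j))
        rw [abs_mul, abs_two] at h3
        have h4 := hξn (i.succAbove j)
        have h5 := hwj j
        exact mul_le_mul (by linarith) (hwj j) (abs_nonneg _) (by norm_num)
      refine (Finset.sum_le_sum this).trans ?_
      simp; linarith
    have hmm : (0 : ℝ) < m + 1 := by positivity
    have hsm : (m + 1) * (3 * m * (κ * r)) ≤ 1 := by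
      have h1 : (m + 1) * (3 * m * (κ * r)) ≤ (m + 1) * (3 * m * (κ * 1)) := by gcongr
      nlinarith [mul_nonneg hκ0.le hm0, mul_nonneg hκ0.le (sq_nonneg (m : ℝ))]
    have hS1 : 0 ≤ 1 - S := by
      have h1 := (abs_le.1 hSd).2
      nlinarith
    set t := Real.sqrt (1 - S) with ht
    have ht0 : 0 ≤ t := Real.sqrt_nonneg _
    have ht2 : t ^ 2 = 1 - S := Real.sq_sqrt hS1
    obtain ⟨v, hv2, hvξ⟩ : ∃ v : ℝ, v ^ 2 = 1 - S ∧ |v + ξ i| = |v| + |ξ i| := by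
      rcases le_total 0 (ξ i) with h | h
      · refine ⟨t, ht2, ?_⟩
        rw [abs_of_nonneg h, abs_of_nonneg ht0, abs_of_nonneg (by linarith)]
      · refine ⟨-t, by rw [neg_sq, ht2], ?_⟩
        rw [abs_of_nonpos h, abs_of_nonpos (by linarith), abs_of_nonpos (by linarith)]; ring
    have hvd : |v - ξ i| ≤ (m + 1) * (3 * m * (κ * r)) := by
      have e : v ^ 2 - ξ i ^ 2 = -(S - ∑ j, ξ (i.succAbove j) ^ 2) := by linarith
      have h1 : |v - ξ i| * |v + ξ i| ≤ 3 * m * (κ * r) := by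
        rw [← abs_mul, show (v - ξ i) * (v + ξ i) = v ^ 2 - ξ i ^ 2 by ring, e, abs_neg]
        exact hSd
      rw [hvξ] at h1
      have h2 : |v - ξ i| * |ξ i| ≤ 3 * m * (κ * r) := by
        nlinarith [mul_nonneg (abs_nonneg (v - ξ i)) (abs_nonneg v)]
      have h3 := mul_le_mul_of_nonneg_left h2 hmm.le
      have h4 := mul_le_mul_of_nonneg_left hi2 (abs_nonneg (v - ξ i))
      nlinarith
    refine ⟨WithLp.toLp 2 (i.insertNth v w), ⟨?_, ?_⟩, ?_⟩
    · refine (dist_le_sum_coord _ _).trans_lt ?_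
      rw [Fin.sum_univ_succAbove _ i]
      simp only [Fin.insertNth_apply_same, Fin.insertNth_apply_succAbove]
      have h1 : ∑ j, |w j - ξ (i.succAbove j)| ≤ m * (κ * r) := by
        refine (Finset.sum_le_sum fun j _ => hwj j).trans ?_
        simp
      have h2 : (m + 1) * (3 * m * (κ * r)) + m * (κ * r) < 1 * r := by
        rw [show (m + 1) * (3 * m * (κ * r)) + m * (κ * r) = ((3 * m ^ 2 + 4 * m) * κ) * r by ring]
        refine mul_lt_mul_of_pos_right ?_ hr
        nlinarith [mul_nonneg hκ0.le hm0, mul_nonneg hκ0.le (sq_nonneg (m : ℝ))]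
      linarith
    · rw [mem_sphere_iff_sum, Fin.sum_univ_succAbove _ i]
      simp only [Fin.insertNth_apply_same, Fin.insertNth_apply_succAbove]
      rw [hv2]; ring
    · funext j
      simp [dropCoord]
  have h1 := (dropCoord_lipschitz i).hausdorffMeasure_image_le (d := (m : ℝ)) (by positivity)
    (ball ξ r ∩ sphere (0 : E (m + 1)) 1)
  rw [ENNReal.coe_one, ENNReal.one_rpow, one_mul] at h1
  refine le_trans ?_ ((measure_mono hsub).trans h1)
  rw [hausdorff_pi, Real.volume_pi_ball _ (by positivity), Fintype.card_fin]
  refine ENNReal.ofReal_le_ofReal (le_of_eq ?_)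
  ring

lemma sphMeasure_succ (m : ℕ) : sphMeasure (m + 1) =
    ((μH[(m : ℝ)] (sphere (0 : E (m + 1)) 1))⁻¹) •
      ((μH[(m : ℝ)]).restrict (sphere (0 : E (m + 1)) 1)) := by
  have h : (((m + 1 : ℕ) : ℝ) - 1) = m := by push_cast; ring
  rw [sphMeasure, h]

lemma hausdorff_sphere_pos (m : ℕ) : μH[(m : ℝ)] (sphere (0 : E (m + 1)) 1) ≠ 0 := by
  obtain ⟨c, hc, h⟩ := le_hausdorff_cap m
  have hx : (EuclideanSpace.single 0 1 : E (m + 1)) ∈ sphere (0 : E (m + 1)) 1 := by simp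
  have h1 := (h _ hx 1 one_pos le_rfl).trans (measure_mono inter_subset_right)
  have h2 : 0 < ENNReal.ofReal (c * 1 ^ m) := by rw [ENNReal.ofReal_pos]; positivity
  exact (h2.trans_le h1).ne'

lemma hausdorff_sphere_lt_top (m : ℕ) : μH[(m : ℝ)] (sphere (0 : E (m + 1)) 1) ≠ ⊤ := by
  obtain ⟨A, hA, h⟩ := hausdorff_cap_le m
  have h1 := h 0 2 two_pos
  have h2 : ball (0 : E (m + 1)) 2 ∩ sphere (0 : E (m + 1)) 1 = sphere (0 : E (m + 1)) 1 := by
    refine inter_eq_right.2 fun x hx => ?_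
    rw [mem_sphere_zero_iff_norm] at hx
    rw [mem_ball_zero_iff, hx]; norm_num
  rw [h2] at h1
  exact ne_top_of_le_ne_top ENNReal.ofReal_ne_top h1

instance sphMeasure_prob_s18 (m : ℕ) : IsProbabilityMeasure (sphMeasure (m + 1)) := by
  constructor
  rw [sphMeasure_succ, Measure.smul_apply, Measure.restrict_apply_univ, smul_eq_mul]
  exact ENNReal.inv_mul_cancel (hausdorff_sphere_pos m) (hausdorff_sphere_lt_top m)

lemma ae_mem_sphere (m : ℕ) : ∀ᵐ ξ ∂(sphMeasure (m + 1)), ξ ∈ sphere (0 : E (m + 1)) 1 := by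
  rw [sphMeasure_succ]
  exact Measure.ae_smul_measure (ae_restrict_mem isClosed_sphere.measurableSet) _

lemma sphMeasure_apply_ball (m : ℕ) (z : E (m + 1)) (r : ℝ) : sphMeasure (m + 1) (ball z r) =
    (μH[(m : ℝ)] (sphere (0 : E (m + 1)) 1))⁻¹ *
      μH[(m : ℝ)] (ball z r ∩ sphere (0 : E (m + 1)) 1) := by
  rw [sphMeasure_succ, Measure.smul_apply, Measure.restrict_apply measurableSet_ball, smul_eq_mul]

lemma sphMeasure_inter_sphere (m : ℕ) (s : Set (E (m + 1))) :
    sphMeasure (m + 1) (s ∩ sphere (0 : E (m + 1)) 1) = sphMeasure (m + 1) s := by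
  refine measure_congr ?_
  filter_upwards [ae_mem_sphere m] with x hx
  exact propext ⟨fun h => h.1, fun h => ⟨h, hx⟩⟩

/-- Upper Ahlfors regularity of the normalized surface measure. -/
lemma sphMeasure_ball_le_s18 (m : ℕ) : ∃ A : ℝ, 0 < A ∧ ∀ (z : E (m + 1)) (r : ℝ), 0 < r →
    sphMeasure (m + 1) (ball z r) ≤ ENNReal.ofReal (A * r ^ m) := by
  obtain ⟨A, hA, h⟩ := hausdorff_cap_le m
  set T := μH[(m : ℝ)] (sphere (0 : E (m + 1)) 1) with hT
  have hT0 := hausdorff_sphere_pos m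
  have hT1 := hausdorff_sphere_lt_top m
  refine ⟨T⁻¹.toReal * A, mul_pos (ENNReal.toReal_pos (ENNReal.inv_ne_zero.2 hT1)
    (ENNReal.inv_ne_top.2 hT0)) hA, fun z r hr => ?_⟩
  rw [sphMeasure_apply_ball, mul_assoc, ENNReal.ofReal_mul ENNReal.toReal_nonneg,
    ENNReal.ofReal_toReal (ENNReal.inv_ne_top.2 hT0)]
  exact mul_le_mul_right (h z r hr) _

/-- Lower Ahlfors regularity of the normalized surface measure. -/
lemma le_sphMeasure_ball_s18 (m : ℕ) : ∃ c : ℝ, 0 < c ∧ ∀ ξ ∈ sphere (0 : E (m + 1)) 1, ∀ r : ℝ,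
    0 < r → r ≤ 1 → c * r ^ m ≤ (sphMeasure (m + 1) (ball ξ r)).toReal := by
  obtain ⟨c, hc, h⟩ := le_hausdorff_cap m
  set T := μH[(m : ℝ)] (sphere (0 : E (m + 1)) 1) with hT
  have hT0 := hausdorff_sphere_pos m
  have hT1 := hausdorff_sphere_lt_top m
  refine ⟨T⁻¹.toReal * c, mul_pos (ENNReal.toReal_pos (ENNReal.inv_ne_zero.2 hT1)
    (ENNReal.inv_ne_top.2 hT0)) hc, fun ξ hξ r hr hr1 => ?_⟩
  rw [← ENNReal.ofReal_le_iff_le_toReal (measure_ne_top _ _), sphMeasure_apply_ball, mul_assoc,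
    ENNReal.ofReal_mul ENNReal.toReal_nonneg, ENNReal.ofReal_toReal (ENNReal.inv_ne_top.2 hT0)]
  exact mul_le_mul_right (h ξ hξ r hr hr1) _

/-! ### The hyperbolic Poisson kernel -/

/-- Dyadic estimate: for `s > m`, `∫_{|ξ-z| ≥ δ} |ξ-z|^{-s} dσ(ξ) ≲ δ^{m-s}`. -/
lemma lintegral_tail_le (m : ℕ) (s : ℝ) (hs : m < s) : ∃ C : ℝ, 0 < C ∧
    ∀ (z : E (m + 1)) (δ : ℝ), 0 < δ →
      ∫⁻ ξ in (ball z δ)ᶜ, ENNReal.ofReal (dist ξ z ^ (-s)) ∂(sphMeasure (m + 1)) ≤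
        ENNReal.ofReal (C * δ ^ ((m : ℝ) - s)) := by
  obtain ⟨A, hA, h⟩ := sphMeasure_ball_le_s18 m
  set q : ℝ := 2 ^ ((m : ℝ) - s) with hq
  have hq0 : 0 < q := by positivity
  have hq1 : q < 1 := Real.rpow_lt_one_of_one_lt_of_neg one_lt_two (by linarith)
  have hgeo := hasSum_geometric_of_lt_one hq0.le hq1
  refine ⟨A * 2 ^ m * (1 - q)⁻¹, by have := sub_pos.2 hq1; positivity, fun z δ hδ => ?_⟩
  set an : ℕ → Set (E (m + 1)) := fun j => ball z (2 ^ (j + 1) * δ) \ ball z (2 ^ j * δ) with han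
  have hcov : (ball z δ)ᶜ ⊆ ⋃ j, an j := by
    intro ξ hξ
    have hd : δ ≤ dist ξ z := by simpa using hξ
    have h1 : 1 ≤ dist ξ z / δ := (one_le_div hδ).2 hd
    obtain ⟨j, hj1, hj2⟩ := exists_nat_pow_near h1 one_lt_two
    refine mem_iUnion.2 ⟨j, ?_, ?_⟩
    · rw [mem_ball]; rwa [div_lt_iff₀ hδ] at hj2
    · rw [mem_ball, not_lt]; rwa [le_div_iff₀ hδ] at hj1
  have hterm : ∀ j, ∫⁻ ξ in an j, ENNReal.ofReal (dist ξ z ^ (-s)) ∂(sphMeasure (m + 1)) ≤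
      ENNReal.ofReal (A * 2 ^ m * δ ^ ((m : ℝ) - s) * q ^ j) := by
    intro j
    have hpos : (0 : ℝ) < 2 ^ j * δ := by positivity
    have h1 : ∫⁻ ξ in an j, ENNReal.ofReal (dist ξ z ^ (-s)) ∂(sphMeasure (m + 1)) ≤
        ∫⁻ ξ in an j, ENNReal.ofReal ((2 ^ j * δ) ^ (-s)) ∂(sphMeasure (m + 1)) := by
      refine setLIntegral_mono measurable_const fun ξ hξ => ENNReal.ofReal_le_ofReal ?_
      have h2 : 2 ^ j * δ ≤ dist ξ z := by simpa using hξ.2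
      exact Real.rpow_le_rpow_of_nonpos hpos h2 (by have : (0 : ℝ) ≤ m := by positivity
                                                    linarith)
    refine h1.trans ?_
    rw [setLIntegral_const]
    refine (mul_le_mul_right ((measure_mono sdiff_subset).trans
      (h z (2 ^ (j + 1) * δ) (by positivity))) _).trans ?_
    rw [← ENNReal.ofReal_mul (by positivity)]
    refine ENNReal.ofReal_le_ofReal (le_of_eq ?_)
    have e1 : (2 ^ j * δ) ^ (-s) = (2 ^ j * δ) ^ ((m : ℝ) - s) * ((2 ^ j * δ) ^ m)⁻¹ := by
      rw [show -s = ((m : ℝ) - s) - m by ring, Real.rpow_sub hpos, Real.rpow_natCast]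
      rfl
    have e2 : ((2 : ℝ) ^ j * δ) ^ ((m : ℝ) - s) = q ^ j * δ ^ ((m : ℝ) - s) := by
      rw [Real.mul_rpow (by positivity) hδ.le, hq, ← Real.rpow_natCast, ← Real.rpow_natCast,
        ← Real.rpow_mul (by norm_num), ← Real.rpow_mul (by norm_num), mul_comm (j : ℝ)]
    rw [e1, e2, show (2 : ℝ) ^ (j + 1) * δ = 2 * (2 ^ j * δ) by ring, mul_pow 2 _ m]
    have : (2 ^ j * δ) ^ m ≠ 0 := by positivity
    field_simp
  refine (lintegral_mono_set hcov).trans ((lintegral_iUnion_le _ _).trans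
    ((ENNReal.tsum_le_tsum hterm).trans ?_))
  rw [← ENNReal.ofReal_tsum_of_nonneg (fun j => by positivity) (hgeo.summable.mul_left _),
    tsum_mul_left, hgeo.tsum_eq]
  refine ENNReal.ofReal_le_ofReal (le_of_eq ?_)
  ring

/-- The kernel `|y|^{-2m}`: on the sphere, `P_h(x,ξ) = (1-|x|²)^m |x-ξ|^{-2m}` for `n = m+1`. -/
def hker {n : ℕ} (m : ℕ) (y : E n) : ℝ := ((‖y‖ ^ 2) ^ m)⁻¹

lemma Ph_eq (m : ℕ) (x ξ : E (m + 1)) : Ph (m + 1) x ξ = (1 - ‖x‖ ^ 2) ^ m * hker m (x - ξ) := by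
  rw [Ph, hker, Nat.add_sub_cancel, div_pow]; rfl

lemma one_sub_norm_le {n : ℕ} (x : E n) {ξ : E n} (hξ : ξ ∈ sphere (0 : E n) 1) :
    1 - ‖x‖ ≤ ‖x - ξ‖ := by
  have h1 := norm_sub_norm_le ξ x
  rw [mem_sphere_zero_iff_norm] at hξ
  rw [norm_sub_rev, hξ] at h1
  linarith

lemma one_sub_norm_sq_pow_le {n : ℕ} (m : ℕ) {x : E n} (hx : x ∈ ball (0 : E n) 1) :
    (1 - ‖x‖ ^ 2) ^ m ≤ 2 ^ m * (1 - ‖x‖) ^ m := by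
  rw [mem_ball_zero_iff] at hx
  have := norm_nonneg x
  rw [← mul_pow]
  refine pow_le_pow_left₀ (by nlinarith) (by nlinarith) m

/-- The hyperbolic Poisson kernels have bounded mass. -/
lemma lintegral_Ph_le (m : ℕ) (hm : 1 ≤ m) : ∃ C : ℝ, 0 < C ∧ ∀ x ∈ ball (0 : E (m + 1)) 1,
    ∫⁻ ξ, ‖Ph (m + 1) x ξ‖ₑ ∂(sphMeasure (m + 1)) ≤ ENNReal.ofReal C := by
  have hm' : (0 : ℝ) < m := by exact_mod_cast hm
  obtain ⟨C, hC, h⟩ := lintegral_tail_le m (2 * m) (by linarith)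
  refine ⟨2 ^ m * C, by positivity, fun x hx => ?_⟩
  have hx1 := mem_ball_zero_iff.1 hx
  set δ := 1 - ‖x‖ with hδ
  have hδ0 : 0 < δ := by linarith
  have hae : ∀ᵐ ξ ∂(sphMeasure (m + 1)), ξ ∈ (ball x δ)ᶜ := by
    filter_upwards [ae_mem_sphere m] with ξ hξ
    rw [mem_compl_iff, mem_ball, not_lt, dist_eq_norm, norm_sub_rev]
    exact one_sub_norm_le x hξ
  rw [← Measure.restrict_eq_self_of_ae_mem hae]
  have hle : ∫⁻ ξ in (ball x δ)ᶜ, ‖Ph (m + 1) x ξ‖ₑ ∂(sphMeasure (m + 1)) ≤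
      ∫⁻ ξ in (ball x δ)ᶜ, ENNReal.ofReal (2 ^ m * δ ^ m) *
        ENNReal.ofReal (dist ξ x ^ (-(2 * m : ℝ))) ∂(sphMeasure (m + 1)) := by
    refine setLIntegral_mono' measurableSet_ball.compl fun ξ hξ => ?_
    have hd : δ ≤ dist ξ x := by simpa using hξ
    have h0 : 0 ≤ (1 - ‖x‖ ^ 2) ^ m := pow_nonneg (by nlinarith [norm_nonneg x]) _
    rw [Real.enorm_eq_ofReal_abs, ← ENNReal.ofReal_mul (by positivity)]
    refine ENNReal.ofReal_le_ofReal ?_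
    have e : hker m (x - ξ) = dist ξ x ^ (-(2 * m : ℝ)) := by
      rw [hker, ← dist_eq_norm, dist_comm, Real.rpow_neg dist_nonneg, ← pow_mul,
        ← Real.rpow_natCast]
      push_cast; rfl
    rw [Ph_eq, e, abs_of_nonneg (by positivity)]
    exact mul_le_mul_of_nonneg_right (one_sub_norm_sq_pow_le m hx) (by positivity)
  refine hle.trans ?_
  rw [lintegral_const_mul' _ _ ENNReal.ofReal_ne_top]
  refine (mul_le_mul_right (h x δ hδ0) _).trans ?_
  rw [← ENNReal.ofReal_mul (by positivity)]
  refine ENNReal.ofReal_le_ofReal (le_of_eq ?_)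
  rw [show (m : ℝ) - 2 * m = -(m : ℝ) by ring, Real.rpow_neg hδ0.le, Real.rpow_natCast]
  field_simp

/-- `L^∞` bound for the hyperbolic Poisson integral. -/
lemma abs_PhInt_le (m : ℕ) (hm : 1 ≤ m) : ∃ C : ℝ, 0 < C ∧ ∀ (a : E (m + 1) → ℝ) (B : ℝ), 0 ≤ B →
    (∀ᵐ ξ ∂(sphMeasure (m + 1)), |a ξ| ≤ B) → ∀ x ∈ ball (0 : E (m + 1)) 1,
      |PhInt (m + 1) a x| ≤ C * B := by
  obtain ⟨C, hC, h⟩ := lintegral_Ph_le m hm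
  refine ⟨C, hC, fun a B hB ha x hx => ?_⟩
  have h1 : ‖PhInt (m + 1) a x‖ₑ ≤ ENNReal.ofReal (C * B) := by
    refine (enorm_integral_le_lintegral_enorm _).trans ?_
    have h2 : ∫⁻ ξ, ‖Ph (m + 1) x ξ * a ξ‖ₑ ∂(sphMeasure (m + 1)) ≤
        ∫⁻ ξ, ‖Ph (m + 1) x ξ‖ₑ * ENNReal.ofReal B ∂(sphMeasure (m + 1)) := by
      refine lintegral_mono_ae ?_
      filter_upwards [ha] with ξ hξ
      rw [enorm_mul]
      refine mul_le_mul_right ?_ _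
      rw [Real.enorm_eq_ofReal_abs]
      exact ENNReal.ofReal_le_ofReal hξ
    refine h2.trans ?_
    rw [lintegral_mul_const' _ _ ENNReal.ofReal_ne_top, ENNReal.ofReal_mul hC.le]
    exact mul_le_mul_left (h x hx) _
  rw [Real.enorm_eq_ofReal_abs] at h1
  exact (ENNReal.ofReal_le_ofReal_iff (by positivity)).1 h1

lemma hker_contDiffAt {n : ℕ} (m : ℕ) {y : E n} (hy : y ≠ 0) : ContDiffAt ℝ ∞ (hker m) y := by
  unfold hker
  refine ContDiffAt.inv ((contDiff_norm_sq ℝ).pow m).contDiffAt ?_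
  have := norm_pos_iff.2 hy
  positivity

/-- `|y|^{-2m}` agrees away from the origin with a function smooth on the whole space. -/
lemma exists_smooth_hker (m : ℕ) {δ : ℝ} (hδ : 0 < δ) : ∃ H : E (m + 1) → ℝ, ContDiff ℝ ∞ H ∧
    ∀ y, δ < ‖y‖ → H y = hker m y := by
  let f : ContDiffBump (0 : E (m + 1)) := ⟨δ / 2, δ, by positivity, by linarith⟩
  refine ⟨fun y => (1 - f y) * hker m y, ?_, fun y hy => ?_⟩
  · rw [contDiff_iff_contDiffAt]
    intro y
    by_cases hy : y = 0
    · subst hy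
      have : (fun y => (1 - f y) * hker m y) =ᶠ[𝓝 0] fun _ => 0 := by
        filter_upwards [f.eventuallyEq_one] with z hz
        rw [hz]; simp
      exact contDiffAt_const.congr_of_eventuallyEq this
    · exact (contDiffAt_const.sub f.contDiff.contDiffAt).mul (hker_contDiffAt m hy)
  · have : f y = 0 := f.zero_of_le_dist (by simpa [f] using hy.le)
    simp [this]

/-- Homogeneity bound for the derivatives of `|y|^{-2m}`. -/
lemma norm_iteratedFDeriv_hker_le (m k : ℕ) : ∃ C : ℝ, 0 < C ∧ ∀ δ : ℝ, 0 < δ →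
    ∀ H : E (m + 1) → ℝ, (∀ y, δ < ‖y‖ → H y = hker m y) → ∀ y, δ < ‖y‖ →
      ‖iteratedFDeriv ℝ k H y‖ ≤ C * (‖y‖ ^ (2 * m + k))⁻¹ := by
  obtain ⟨G, hG, hGe⟩ := exists_smooth_hker m (half_pos one_pos)
  obtain ⟨C, hC⟩ := (isCompact_closedBall (0 : E (m + 1)) 1).exists_bound_of_continuousOn
    (hG.continuous_iteratedFDeriv (m := k) (by exact_mod_cast le_top)).norm.continuousOn
  refine ⟨|C| + 1, by positivity, fun δ hδ H hH y hy => ?_⟩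
  set c := ‖y‖ with hc
  have hc0 : 0 < c := hδ.trans hy
  let g : E (m + 1) →L[ℝ] E (m + 1) := c⁻¹ • ContinuousLinearMap.id ℝ _
  have hg : ∀ z, g z = c⁻¹ • z := fun z => rfl
  have hloc : H =ᶠ[𝓝 y] fun z => (c ^ (2 * m))⁻¹ • (G ∘ g) z := by
    have h1 : ∀ᶠ z in 𝓝 y, max δ (c / 2) < ‖z‖ :=
      continuous_norm.continuousAt.eventually (lt_mem_nhds (max_lt hy (by simp only [← hc]; linarith)))
    filter_upwards [h1] with z hz
    have hz1 := (le_max_left _ _).trans_lt hz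
    have hz2 := (le_max_right _ _).trans_lt hz
    have hgz : ‖g z‖ = c⁻¹ * ‖z‖ := by
      rw [hg, norm_smul, Real.norm_of_nonneg (inv_pos.2 hc0).le]
    rw [hH z hz1, Function.comp, hGe (g z) ?_, hker, hker, hgz, smul_eq_mul, mul_pow, mul_pow,
      mul_inv, ← mul_assoc, inv_pow, inv_pow, inv_inv, ← pow_mul c,
      inv_mul_cancel₀ (by positivity), one_mul]
    rw [hgz, inv_mul_eq_div, lt_div_iff₀ hc0]; linarith
  rw [(hloc.iteratedFDeriv ℝ k).eq_of_nhds]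
  have hGg : ContDiff ℝ ∞ (G ∘ g) := hG.comp g.contDiff
  have e1 : iteratedFDeriv ℝ k (fun z => (c ^ (2 * m))⁻¹ • (G ∘ g) z) y =
      (c ^ (2 * m))⁻¹ • iteratedFDeriv ℝ k (G ∘ g) y :=
    iteratedFDeriv_const_smul_apply' (hGg.of_le (by exact_mod_cast le_top)).contDiffAt
  rw [e1, g.iteratedFDeriv_comp_right hG y (by exact_mod_cast le_top), norm_smul]
  have h2 := (iteratedFDeriv ℝ k G (g y)).norm_compContinuousLinearMap_le fun _ => g
  have h3 : ‖g‖ ≤ c⁻¹ := by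
    refine g.opNorm_le_bound (inv_pos.2 hc0).le fun z => ?_
    rw [hg, norm_smul, Real.norm_of_nonneg (inv_pos.2 hc0).le]
  have h4 : ‖iteratedFDeriv ℝ k G (g y)‖ ≤ |C| + 1 := by
    have h5 := hC (g y) (by rw [mem_closedBall_zero_iff, hg, norm_smul,
      Real.norm_of_nonneg (inv_pos.2 hc0).le, ← hc, inv_mul_cancel₀ hc0.ne'])
    rw [norm_norm] at h5
    linarith [le_abs_self C]
  have h6 : ∏ _i : Fin k, ‖g‖ ≤ (c⁻¹) ^ k := by
    rw [Finset.prod_const, Finset.card_univ, Fintype.card_fin]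
    exact pow_le_pow_left₀ (norm_nonneg _) h3 k
  have h7 := h2.trans (mul_le_mul h4 h6 (by positivity) (by positivity))
  rw [Real.norm_of_nonneg (by positivity)]
  refine (mul_le_mul_of_nonneg_left h7 (by positivity)).trans (le_of_eq ?_)
  rw [pow_add, mul_inv, inv_pow]; ring

/-! ### The maximal function of one atom -/

/-- The consequences of being a `p`-atom used below, with a uniform constant `A`: either `a` is
bounded by `A`, or it has the size and cancellation of an atom at a scale `r ≤ 1`, the measure of
the cap having been replaced by the power `r^m` comparable to it. -/
def AtomAlt (m : ℕ) (p : ℝ) (k : ℕ) (A : ℝ) (a : E (m + 1) → ℝ) : Prop :=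
  (∀ᵐ ξ ∂(sphMeasure (m + 1)), |a ξ| ≤ A) ∨
    ∃ ξ₀ ∈ sphere (0 : E (m + 1)) 1, ∃ r : ℝ, 0 < r ∧ r ≤ 1 ∧
      (∀ᵐ ξ ∂(sphMeasure (m + 1)), |a ξ| ≤ A * r ^ (-((m : ℝ) / p))) ∧
      ∀ Φ : E (m + 1) → ℝ, ContDiff ℝ ∞ Φ → ∀ M : ℝ, 0 ≤ M →
        (∀ ξ ∈ ball ξ₀ r ∩ sphere (0 : E (m + 1)) 1, ‖iteratedFDeriv ℝ k Φ ξ‖ ≤ M) →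
        |∫ ξ, a ξ * Φ ξ ∂(sphMeasure (m + 1))| ≤ A * M * r ^ ((k : ℝ) + m - m / p)

lemma exists_atomAlt (m : ℕ) (p : ℝ) (hp0 : 0 < p) (hp1 : p ≤ 1) (k : ℕ) : ∃ A : ℝ, 0 < A ∧
    ∀ a : E (m + 1) → ℝ, IsPAtom (m + 1) p k a → AtomAlt m p k A a := by
  obtain ⟨c, hc, h⟩ := le_sphMeasure_ball_s18 m
  have hp2 : 1 ≤ 1 / p := (one_le_div hp0).2 hp1
  have hA1 : 0 < c ^ (-(1 / p)) := by positivity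
  have hA2 : 0 < c ^ (1 - 1 / p) := by positivity
  refine ⟨1 + c ^ (-(1 / p)) + c ^ (1 - 1 / p), by positivity, fun a ha => ?_⟩
  obtain ⟨-, ⟨b, hb, hab⟩ | ⟨ξ₀, hξ₀, r, hr, -, hbd, hmom⟩⟩ := ha
  · left
    filter_upwards [ae_mem_sphere m] with ξ hξ
    rw [hab ξ hξ]; linarith
  rw [sphMeasure_inter_sphere] at hbd hmom
  set S := (sphMeasure (m + 1) (ball ξ₀ r)).toReal with hS
  rcases lt_or_ge 1 r with hr1 | hr1
  · left
    filter_upwards [hbd] with ξ hξ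
    have h1 : c ≤ S := by
      have := h ξ₀ hξ₀ 1 one_pos le_rfl
      rw [one_pow, mul_one] at this
      exact this.trans (ENNReal.toReal_mono (measure_ne_top _ _)
        (measure_mono (ball_subset_ball hr1.le)))
    have := Real.rpow_le_rpow_of_nonpos hc h1 (show -(1 / p) ≤ 0 by linarith)
    linarith
  · right
    have hcS : c * r ^ m ≤ S := h ξ₀ hξ₀ r hr hr1
    have hcr : 0 < c * r ^ m := by positivity
    have hpow : ∀ s : ℝ, s ≤ 0 → S ^ s ≤ c ^ s * r ^ ((m : ℝ) * s) := fun s hs => by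
      refine (Real.rpow_le_rpow_of_nonpos hcr hcS hs).trans (le_of_eq ?_)
      rw [Real.mul_rpow hc.le (by positivity), ← Real.rpow_natCast, ← Real.rpow_mul hr.le]
    refine ⟨ξ₀, hξ₀, r, hr, hr1, ?_, fun Φ hΦ M hM hΦM => ?_⟩
    · filter_upwards [hbd] with ξ hξ
      refine hξ.trans ((hpow _ (by linarith)).trans ?_)
      rw [show (m : ℝ) * -(1 / p) = -(m / p) by ring]
      exact mul_le_mul_of_nonneg_right (by linarith) (by positivity)
    · have hsup : (⨆ x ∈ ball ξ₀ r ∩ sphere (0 : E (m + 1)) 1, ‖iteratedFDeriv ℝ k Φ x‖) ≤ M :=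
        Real.iSup_le (fun x => Real.iSup_le (fun hx => hΦM x hx) hM) hM
      refine (hmom Φ hΦ).trans ?_
      have e : r ^ ((k : ℝ) + m - m / p) = r ^ k * r ^ ((m : ℝ) * (1 - 1 / p)) := by
        rw [← Real.rpow_natCast r k, ← Real.rpow_add hr]; congr 1; ring
      have h1 := hpow (1 - 1 / p) (by linarith)
      have h2 : c ^ (1 - 1 / p) ≤ 1 + c ^ (-(1 / p)) + c ^ (1 - 1 / p) := by linarith
      rw [e]
      calc _ ≤ M * r ^ k * (c ^ (1 - 1 / p) * r ^ ((m : ℝ) * (1 - 1 / p))) := by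
            gcongr
        _ ≤ M * r ^ k * ((1 + c ^ (-(1 / p)) + c ^ (1 - 1 / p)) *
              r ^ ((m : ℝ) * (1 - 1 / p))) := by gcongr
        _ = _ := by ring

lemma AtomAlt.exists_bound {m : ℕ} {p : ℝ} {k : ℕ} {A : ℝ} (hA : 0 < A) {a : E (m + 1) → ℝ}
    (ha : AtomAlt m p k A a) : ∃ B : ℝ, 0 ≤ B ∧ ∀ᵐ ξ ∂(sphMeasure (m + 1)), |a ξ| ≤ B := by
  rcases ha with h | ⟨ξ₀, -, r, hr, -, h, -⟩
  · exact ⟨A, hA.le, h⟩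
  · exact ⟨_, by positivity, h⟩

lemma norm_iteratedFDeriv_comp_const_sub {n : ℕ} (H : E n → ℝ) (k : ℕ) (x ξ : E n) :
    ‖iteratedFDeriv ℝ k (fun η => H (x - η)) ξ‖ = ‖iteratedFDeriv ℝ k H (x - ξ)‖ := by
  have e : (fun η => H (x - η)) = fun η => (H ∘ (LinearIsometryEquiv.neg ℝ)) (η - x) := by
    funext η; simp
  rw [e, iteratedFDeriv_comp_sub, LinearIsometryEquiv.norm_iteratedFDeriv_comp_right]
  simp

/-- Away from the cap of the atom, cancellation gives the decay `|ζ-ξ₀|^{-(m+k)}`. -/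
lemma abs_PhInt_far_le (m : ℕ) (p : ℝ) (k : ℕ) (A : ℝ) (hA : 0 < A) : ∃ K : ℝ, 0 < K ∧
    ∀ (a : E (m + 1) → ℝ) (ξ₀ : E (m + 1)) (r : ℝ), 0 < r →
      (∀ Φ : E (m + 1) → ℝ, ContDiff ℝ ∞ Φ → ∀ M : ℝ, 0 ≤ M →
        (∀ ξ ∈ ball ξ₀ r ∩ sphere (0 : E (m + 1)) 1, ‖iteratedFDeriv ℝ k Φ ξ‖ ≤ M) →
        |∫ ξ, a ξ * Φ ξ ∂(sphMeasure (m + 1))| ≤ A * M * r ^ ((k : ℝ) + m - m / p)) →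
      ∀ ζ ∈ sphere (0 : E (m + 1)) 1, 2 * r ≤ dist ζ ξ₀ → ∀ t ∈ Ioo (0 : ℝ) 1,
        |PhInt (m + 1) a (t • ζ)| ≤
          K * r ^ ((k : ℝ) + m - m / p) * dist ζ ξ₀ ^ (-((m : ℝ) + k)) := by
  obtain ⟨C, hC, hder⟩ := norm_iteratedFDeriv_hker_le m k
  refine ⟨A * (2 ^ m * C * 4 ^ (m + k)), by positivity,
    fun a ξ₀ r hr hmom ζ hζ hD t ht => ?_⟩
  obtain ⟨ht0, ht1⟩ := ht
  have hζ1 : ‖ζ‖ = 1 := by simpa using hζ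
  set D := dist ζ ξ₀ with hDdef
  have hD0 : 0 < D := by linarith
  set x := t • ζ with hx
  have hxn : ‖x‖ = t := by rw [hx, norm_smul, hζ1, mul_one, Real.norm_of_nonneg ht0.le]
  have hxb : x ∈ ball (0 : E (m + 1)) 1 := by rw [mem_ball_zero_iff, hxn]; exact ht1
  obtain ⟨H, hH, hHe⟩ := exists_smooth_hker m (δ := (1 - t) / 2) (by linarith)
  have hfar : ∀ ξ ∈ sphere (0 : E (m + 1)) 1, (1 - t) / 2 < ‖x - ξ‖ := fun ξ hξ => by
    have := one_sub_norm_le x hξ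
    rw [hxn] at this; linarith
  have hq0 : 0 ≤ (1 - ‖x‖ ^ 2) ^ m := pow_nonneg (by rw [hxn]; nlinarith) _
  set Φ : E (m + 1) → ℝ := fun ξ => (1 - ‖x‖ ^ 2) ^ m • H (x - ξ) with hΦ
  have hHx : ContDiff ℝ ∞ fun ξ => H (x - ξ) := hH.comp (contDiff_const.sub contDiff_id)
  have hΦs : ContDiff ℝ ∞ Φ := hHx.const_smul _
  have hint : PhInt (m + 1) a x = ∫ ξ, a ξ * Φ ξ ∂(sphMeasure (m + 1)) := by
    refine integral_congr_ae ?_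
    filter_upwards [ae_mem_sphere m] with ξ hξ
    rw [Ph_eq, hΦ]; simp only [smul_eq_mul]
    rw [hHe _ (hfar ξ hξ), mul_comm]
  have hM : ∀ ξ ∈ ball ξ₀ r ∩ sphere (0 : E (m + 1)) 1, ‖iteratedFDeriv ℝ k Φ ξ‖ ≤
      2 ^ m * C * ((D / 4) ^ (m + k))⁻¹ := by
    rintro ξ ⟨hξ1, hξ2⟩
    set d := ‖x - ξ‖ with hd
    have hd1 : 1 - t ≤ d := by have := one_sub_norm_le x hξ2; rwa [hxn] at this
    have hd0 : 0 < d := by linarith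
    have hdD : D / 4 ≤ d := by
      have h1 : dist ζ ξ₀ ≤ dist ζ ξ + dist ξ ξ₀ := dist_triangle _ _ _
      have h2 : dist ζ ξ ≤ dist ζ x + dist x ξ := dist_triangle _ _ _
      have h3 : dist ζ x = 1 - t := by
        rw [dist_eq_norm, hx, show ζ - t • ζ = (1 - t) • ζ by rw [sub_smul, one_smul],
          norm_smul, hζ1, mul_one, Real.norm_of_nonneg (by linarith)]
      have h4 : dist x ξ = d := dist_eq_norm _ _
      have h5 : dist ξ ξ₀ < r := hξ1
      linarith
    have e1 : iteratedFDeriv ℝ k Φ ξ =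
        (1 - ‖x‖ ^ 2) ^ m • iteratedFDeriv ℝ k (fun ξ => H (x - ξ)) ξ :=
      iteratedFDeriv_const_smul_apply' (hHx.of_le (by exact_mod_cast le_top)).contDiffAt
    rw [e1, norm_smul, Real.norm_of_nonneg hq0, norm_iteratedFDeriv_comp_const_sub]
    have h6 := hder _ (by linarith) H hHe (x - ξ) (hfar ξ hξ2)
    have h7 : (1 - ‖x‖ ^ 2) ^ m ≤ 2 ^ m * d ^ m := by
      refine (one_sub_norm_sq_pow_le m hxb).trans ?_
      rw [hxn]
      gcongr
    calc _ ≤ (2 ^ m * d ^ m) * (C * (d ^ (2 * m + k))⁻¹) := by gcongr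
      _ = 2 ^ m * C * (d ^ (m + k))⁻¹ := by
        rw [show 2 * m + k = m + (m + k) by ring, pow_add d m (m + k)]
        field_simp
      _ ≤ _ := by gcongr
  have hfin := hmom Φ hΦs _ (by positivity) hM
  rw [hint]
  refine hfin.trans (le_of_eq ?_)
  have e2 : D ^ (-((m : ℝ) + k)) = (D ^ (m + k))⁻¹ := by
    rw [Real.rpow_neg hD0.le, ← Real.rpow_natCast]; push_cast; rfl
  rw [e2, div_pow]
  field_simp

lemma radMax_rpow_le {n : ℕ} {p : ℝ} (hp : 0 < p) {u : E n → ℝ} {ζ : E n} {b : ℝ} (hb : 0 ≤ b)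
    (h : ∀ t ∈ Ioo (0 : ℝ) 1, |u (t • ζ)| ≤ b) : radMax n u ζ ^ p ≤ ENNReal.ofReal (b ^ p) := by
  rw [← ENNReal.ofReal_rpow_of_nonneg hb hp.le]
  refine ENNReal.rpow_le_rpow ?_ hp.le
  refine iSup₂_le fun t ht => ?_
  have := ENNReal.ofReal_le_ofReal (h t ht)
  rwa [← Real.enorm_eq_ofReal_abs] at this

/-- Uniform maximal estimate for a single atom, in terms of a measurable majorant. -/
lemma exists_radMax_majorant (m : ℕ) (hm : 1 ≤ m) (p : ℝ) (hp0 : 0 < p) (k : ℕ)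
    (hk : (m : ℝ) * (1 / p - 1) < k) (A : ℝ) (hA : 0 < A) : ∃ C : ℝ, 0 < C ∧
    ∀ a : E (m + 1) → ℝ, AtomAlt m p k A a → ∃ G : E (m + 1) → ℝ≥0∞, Measurable G ∧
      (∀ ζ ∈ sphere (0 : E (m + 1)) 1, radMax (m + 1) (PhInt (m + 1) a) ζ ^ p ≤ G ζ) ∧
      ∫⁻ ζ, G ζ ∂(sphMeasure (m + 1)) ≤ ENNReal.ofReal C := by
  obtain ⟨C₀, hC₀, h0⟩ := abs_PhInt_le m hm
  obtain ⟨K, hK, hfar⟩ := abs_PhInt_far_le m p k A hA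
  obtain ⟨R, hR, hreg⟩ := sphMeasure_ball_le_s18 m
  set s : ℝ := p * (m + k) with hs
  have hms : (m : ℝ) < s := by
    have := mul_lt_mul_of_pos_left hk hp0
    rw [show p * ((m : ℝ) * (1 / p - 1)) = m - p * m by field_simp] at this
    rw [hs]; linarith
  obtain ⟨T, hT, htail⟩ := lintegral_tail_le m s hms
  have hball : ∀ ζ ∈ sphere (0 : E (m + 1)) 1, ∀ t ∈ Ioo (0 : ℝ) 1,
      t • ζ ∈ ball (0 : E (m + 1)) 1 := fun ζ hζ t ht => by
    rw [mem_sphere_zero_iff_norm] at hζ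
    rw [mem_ball_zero_iff, norm_smul, hζ, mul_one, Real.norm_of_nonneg ht.1.le]; exact ht.2
  refine ⟨(C₀ * A) ^ p + ((C₀ * A) ^ p * (R * 2 ^ m) + K ^ p * (T * 2 ^ ((m : ℝ) - s))),
    by positivity, fun a ha => ?_⟩
  rcases ha with ha | ⟨ξ₀, hξ₀, r, hr, hr1, hbd, hmom⟩
  · refine ⟨fun _ => ENNReal.ofReal ((C₀ * A) ^ p), measurable_const, fun ζ hζ => ?_, ?_⟩
    · exact radMax_rpow_le hp0 (by positivity) fun t ht => h0 a A hA.le ha _ (hball ζ hζ t ht)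
    · rw [lintegral_const, measure_univ, mul_one]
      refine ENNReal.ofReal_le_ofReal ?_
      have : 0 ≤ (C₀ * A) ^ p * (R * 2 ^ m) + K ^ p * (T * 2 ^ ((m : ℝ) - s)) := by positivity
      linarith
  set e : ℝ := (k : ℝ) + m - m / p with he
  have hb := measurableSet_ball (x := ξ₀) (ε := 2 * r)
  set c1 := ENNReal.ofReal ((C₀ * (A * r ^ (-((m : ℝ) / p)))) ^ p) with hc1
  set c2 := ENNReal.ofReal ((K * r ^ e) ^ p) with hc2
  have hmeas : Measurable fun ζ : E (m + 1) => c2 * ENNReal.ofReal (dist ζ ξ₀ ^ (-s)) := by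
    fun_prop
  refine ⟨fun ζ => (ball ξ₀ (2 * r)).indicator (fun _ => c1) ζ + (ball ξ₀ (2 * r))ᶜ.indicator
    (fun ζ => c2 * ENNReal.ofReal (dist ζ ξ₀ ^ (-s))) ζ,
    (measurable_const.indicator hb).add (hmeas.indicator hb.compl), fun ζ hζ => ?_, ?_⟩
  · by_cases hζb : ζ ∈ ball ξ₀ (2 * r)
    · beta_reduce
      rw [indicator_of_mem hζb, indicator_of_notMem (by simpa using hζb), add_zero]
      exact radMax_rpow_le hp0 (by positivity) fun t ht =>
        h0 a _ (by positivity) hbd _ (hball ζ hζ t ht)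
    · beta_reduce
      rw [indicator_of_notMem hζb, indicator_of_mem hζb, zero_add]
      have hD : 2 * r ≤ dist ζ ξ₀ := by simpa using hζb
      refine (radMax_rpow_le hp0 (by positivity) fun t ht => hfar a ξ₀ r hr hmom ζ hζ hD t ht).trans ?_
      rw [hc2, ← ENNReal.ofReal_mul (by positivity)]
      refine ENNReal.ofReal_le_ofReal (le_of_eq ?_)
      rw [Real.mul_rpow (by positivity) (by positivity), ← Real.rpow_mul dist_nonneg, hs]
      congr 2; ring
  · rw [lintegral_add_left (measurable_const.indicator hb), lintegral_indicator_const hb,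
      lintegral_indicator hb.compl, lintegral_const_mul' _ _ ENNReal.ofReal_ne_top]
    refine (add_le_add (mul_le_mul_right (hreg ξ₀ (2 * r) (by positivity)) _)
      (mul_le_mul_right (htail ξ₀ (2 * r) (by positivity)) _)).trans ?_
    rw [hc1, ← ENNReal.ofReal_mul (by positivity), ← ENNReal.ofReal_mul (by positivity),
      ← ENNReal.ofReal_add (by positivity) (by positivity)]
    refine ENNReal.ofReal_le_ofReal ?_
    have e1 : (C₀ * (A * r ^ (-((m : ℝ) / p)))) ^ p * (R * (2 * r) ^ m) =
        (C₀ * A) ^ p * (R * 2 ^ m) := by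
      rw [← mul_assoc C₀ A, Real.mul_rpow (by positivity) (by positivity), ← Real.rpow_mul hr.le,
        show -((m : ℝ) / p) * p = -(m : ℝ) by field_simp, Real.rpow_neg hr.le, Real.rpow_natCast,
        mul_pow]
      field_simp
    have e2 : (K * r ^ e) ^ p * (T * (2 * r) ^ ((m : ℝ) - s)) =
        K ^ p * (T * 2 ^ ((m : ℝ) - s)) := by
      rw [Real.mul_rpow hK.le (by positivity), Real.mul_rpow two_pos.le hr.le, ← Real.rpow_mul hr.le]
      have : r ^ (e * p) * r ^ ((m : ℝ) - s) = 1 := by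
        rw [← Real.rpow_add hr, he, hs]
        rw [show ((k : ℝ) + m - m / p) * p + (m - p * (m + k)) = 0 by field_simp; ring,
          Real.rpow_zero]
      linear_combination K ^ p * T * 2 ^ ((m : ℝ) - s) * this
    rw [e1, e2]
    have : 0 ≤ (C₀ * A) ^ p := by positivity
    linarith

/-! ### Series of spherical convolutions -/

/-- The spherical convolution `x ↦ ∫ H(x-ξ) a(ξ) dσ(ξ)`. -/
def sphConv {n : ℕ} (H a : E n → ℝ) (x : E n) : ℝ := ∫ ξ, H (x - ξ) * a ξ ∂(sphMeasure n)

/-- The directional derivative `∂_v H`, as a function on the whole space. -/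
def pd {n : ℕ} (v : E n) (H : E n → ℝ) (y : E n) : ℝ := fderiv ℝ H y v

/-- The series `Σ_j λ_j ∫ H(x-ξ) a_j(ξ) dσ(ξ)`. -/
def atomSum {n : ℕ} (lam : ℕ → ℝ) (a : ℕ → E n → ℝ) (H : E n → ℝ) (x : E n) : ℝ :=
  ∑' j, lam j * sphConv H (a j) x

lemma contDiff_pd {n : ℕ} {H : E n → ℝ} (hH : ContDiff ℝ ∞ H) (v : E n) : ContDiff ℝ ∞ (pd v H) :=
  (hH.fderiv_right (m := ∞) (by simp)).clm_apply contDiff_const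

lemma sub_mem_closedBall_two {n : ℕ} {x ξ : E n} (hx : x ∈ ball (0 : E n) 1)
    (hξ : ξ ∈ sphere (0 : E n) 1) : x - ξ ∈ closedBall (0 : E n) 2 := by
  rw [mem_ball_zero_iff] at hx
  rw [mem_sphere_zero_iff_norm] at hξ
  rw [mem_closedBall_zero_iff]
  have := norm_sub_le x ξ
  linarith

/-- Against a fixed smooth convolution kernel, all atoms are bounded by the same constant: small
caps are handled by the moment condition, whose total power of the radius is positive. -/
lemma exists_abs_sphConv_le {m : ℕ} {p : ℝ} (hp0 : 0 < p) {k : ℕ}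
    (hk : (m : ℝ) * (1 / p - 1) < k) {A : ℝ} (hA : 0 < A) {H : E (m + 1) → ℝ}
    (hH : ContDiff ℝ ∞ H) : ∃ C : ℝ, 0 ≤ C ∧ ∀ a, AtomAlt m p k A a →
      ∀ x ∈ ball (0 : E (m + 1)) 1, |sphConv H a x| ≤ C := by
  obtain ⟨C0, h0⟩ := (isCompact_closedBall (0 : E (m + 1)) 2).exists_bound_of_continuousOn
    hH.continuous.continuousOn
  obtain ⟨C1, h1⟩ := (isCompact_closedBall (0 : E (m + 1)) 2).exists_bound_of_continuousOn
    (hH.continuous_iteratedFDeriv (m := k) (by exact_mod_cast le_top)).norm.continuousOn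
  have h00 := (norm_nonneg _).trans (h0 0 (mem_closedBall_self two_pos.le))
  have h10 := (norm_nonneg _).trans (h1 0 (mem_closedBall_self two_pos.le))
  refine ⟨C0 * A + A * C1, by positivity, fun a ha x hx => ?_⟩
  rcases ha with ha | ⟨ξ₀, hξ₀, r, hr, hr1, hbd, hmom⟩
  · have : ‖sphConv H a x‖ ≤ C0 * A * (sphMeasure (m + 1)).real univ := by
      refine norm_integral_le_of_norm_le_const ?_
      filter_upwards [ha, ae_mem_sphere m] with ξ hξ hξS
      rw [norm_mul]
      exact mul_le_mul (h0 _ (sub_mem_closedBall_two hx hξS)) hξ (norm_nonneg _) h00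
    rw [probReal_univ, mul_one] at this
    exact this.trans (by nlinarith)
  · have h2 := hmom (fun ξ => H (x - ξ)) (hH.comp (contDiff_const.sub contDiff_id)) C1 h10
      fun ξ hξ => by
        rw [norm_iteratedFDeriv_comp_const_sub]
        simpa using h1 _ (sub_mem_closedBall_two hx hξ.2)
    have h3 : r ^ ((k : ℝ) + m - m / p) ≤ 1 := by
      refine Real.rpow_le_one hr.le hr1 ?_
      rw [show (m : ℝ) * (1 / p - 1) = m / p - m by ring] at hk
      linarith
    have h4 : sphConv H a x = ∫ ξ, a ξ * H (x - ξ) ∂(sphMeasure (m + 1)) := by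
      simp only [sphConv, mul_comm]
    rw [h4]
    refine h2.trans ?_
    have : A * C1 * r ^ ((k : ℝ) + m - m / p) ≤ A * C1 * 1 := by gcongr
    nlinarith

lemma integrable_sphConv {m : ℕ} {H a : E (m + 1) → ℝ} (hH : Continuous H) (ha : Measurable a)
    {B : ℝ} (hB : ∀ᵐ ξ ∂(sphMeasure (m + 1)), |a ξ| ≤ B) {x : E (m + 1)}
    (hx : x ∈ ball (0 : E (m + 1)) 1) :
    Integrable (fun ξ => H (x - ξ) * a ξ) (sphMeasure (m + 1)) := by
  obtain ⟨C0, h0⟩ := (isCompact_closedBall (0 : E (m + 1)) 2).exists_bound_of_continuousOn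
    hH.continuousOn
  have h00 := (norm_nonneg _).trans (h0 0 (mem_closedBall_self two_pos.le))
  refine Integrable.of_bound (C := C0 * B) (by
    have : Measurable fun ξ => H (x - ξ) := (hH.comp (continuous_const.sub continuous_id)).measurable
    exact (this.mul ha).aestronglyMeasurable) ?_
  filter_upwards [hB, ae_mem_sphere m] with ξ hξ hξS
  rw [norm_mul]
  exact mul_le_mul (h0 _ (sub_mem_closedBall_two hx hξS)) hξ (norm_nonneg _) h00

lemma exists_hasFDerivAt_sphConv {m : ℕ} {H a : E (m + 1) → ℝ} (hH : ContDiff ℝ ∞ H)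
    (ha : Measurable a) {B : ℝ} (hB : ∀ᵐ ξ ∂(sphMeasure (m + 1)), |a ξ| ≤ B) {x : E (m + 1)}
    (hx : x ∈ ball (0 : E (m + 1)) 1) :
    ∃ L : E (m + 1) →L[ℝ] ℝ, HasFDerivAt (sphConv H a) L x ∧
      ∀ v, L v = sphConv (pd v H) a x := by
  have hHd : Continuous (fderiv ℝ H) := hH.continuous_fderiv (by simp)
  obtain ⟨C1, h1⟩ := (isCompact_closedBall (0 : E (m + 1)) 2).exists_bound_of_continuousOn
    hHd.continuousOn
  have h10 := (norm_nonneg _).trans (h1 0 (mem_closedBall_self two_pos.le))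
  have hmeas : AEStronglyMeasurable (fun ξ => a ξ • fderiv ℝ H (x - ξ)) (sphMeasure (m + 1)) :=
    ha.aestronglyMeasurable.smul
      (hHd.comp (continuous_const.sub continuous_id)).aestronglyMeasurable
  have hbd : ∀ᵐ ξ ∂(sphMeasure (m + 1)), ∀ y ∈ ball (0 : E (m + 1)) 1,
      ‖a ξ • fderiv ℝ H (y - ξ)‖ ≤ B * C1 := by
    filter_upwards [hB, ae_mem_sphere m] with ξ hξ hξS y hy
    rw [norm_smul]
    exact mul_le_mul hξ (h1 _ (sub_mem_closedBall_two hy hξS)) (norm_nonneg _)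
      ((abs_nonneg _).trans hξ)
  have hint : Integrable (fun ξ => a ξ • fderiv ℝ H (x - ξ)) (sphMeasure (m + 1)) :=
    Integrable.of_bound hmeas (B * C1) (hbd.mono fun ξ h => h x hx)
  have hnhds := isOpen_ball.mem_nhds hx
  have key := hasFDerivAt_integral_of_dominated_of_fderiv_le (𝕜 := ℝ)
    (F := fun y ξ => H (y - ξ) * a ξ) (F' := fun y ξ => a ξ • fderiv ℝ H (y - ξ))
    (μ := sphMeasure (m + 1)) (bound := fun _ => B * C1) hnhds
    (by
      filter_upwards [hnhds] with y hy
      exact (integrable_sphConv hH.continuous ha hB hy).aestronglyMeasurable)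
    (integrable_sphConv hH.continuous ha hB hx) hmeas hbd (integrable_const _)
    (ae_of_all _ fun ξ y _ => by
      have h := (hH.differentiable (by simp) (y - ξ)).hasFDerivAt.comp y
        ((hasFDerivAt_id y).sub_const ξ)
      have := h.mul_const (a ξ)
      rw [ContinuousLinearMap.comp_id] at this
      exact this)
  refine ⟨_, key, fun v => ?_⟩
  rw [ContinuousLinearMap.integral_apply hint]
  refine integral_congr_ae (ae_of_all _ fun ξ => ?_)
  simp [pd, mul_comm]

lemma norm_clm_le_sum {n : ℕ} (L : E n →L[ℝ] ℝ) :
    ‖L‖ ≤ ∑ i, |L (EuclideanSpace.single i 1)| := by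
  refine L.opNorm_le_bound (Finset.sum_nonneg fun i _ => abs_nonneg _) fun v => ?_
  have hv : v = ∑ i, v i • (EuclideanSpace.single i (1 : ℝ) : E n) := by
    simpa using ((EuclideanSpace.basisFun (Fin n) ℝ).sum_repr v).symm
  have : L v = ∑ i, v i * L (EuclideanSpace.single i 1) := by
    conv_lhs => rw [hv]
    simp
  rw [this, Finset.sum_mul]
  refine (Finset.abs_sum_le_sum_abs _ _).trans (Finset.sum_le_sum fun i _ => ?_)
  rw [abs_mul, mul_comm]
  exact mul_le_mul_of_nonneg_left (abs_coord_le_norm v i) (abs_nonneg _)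

/-- A sequence of atoms together with an absolutely summable sequence of coefficients. -/
structure AtomSeq (m : ℕ) (p : ℝ) (k : ℕ) (A : ℝ) (a : ℕ → E (m + 1) → ℝ) (lam : ℕ → ℝ) :
    Prop where
  p_pos : 0 < p
  moments : (m : ℝ) * (1 / p - 1) < k
  A_pos : 0 < A
  meas : ∀ j, Measurable (a j)
  atom : ∀ j, AtomAlt m p k A (a j)
  summable : Summable fun j => |lam j|

section
variable {m : ℕ} {p : ℝ} {k : ℕ} {A : ℝ} {a : ℕ → E (m + 1) → ℝ} {lam : ℕ → ℝ}

lemma AtomSeq.summable_sphConv (h : AtomSeq m p k A a lam) {H : E (m + 1) → ℝ}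
    (hH : ContDiff ℝ ∞ H) {x : E (m + 1)} (hx : x ∈ ball (0 : E (m + 1)) 1) :
    Summable fun j => lam j * sphConv H (a j) x := by
  obtain ⟨C, hC, hb⟩ := exists_abs_sphConv_le h.p_pos h.moments h.A_pos hH
  refine Summable.of_norm_bounded (h.summable.mul_right C) fun j => ?_
  rw [norm_mul]
  exact mul_le_mul_of_nonneg_left (hb _ (h.atom j) x hx) (norm_nonneg _)

lemma AtomSeq.exists_hasFDerivAt (h : AtomSeq m p k A a lam) {H : E (m + 1) → ℝ}
    (hH : ContDiff ℝ ∞ H) {x : E (m + 1)} (hx : x ∈ ball (0 : E (m + 1)) 1) :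
    ∃ L : E (m + 1) →L[ℝ] ℝ, HasFDerivAt (atomSum lam a H) L x ∧
      ∀ v, L v = atomSum lam a (pd v H) x := by
  have hex : ∀ j, ∀ y, ∃ L : E (m + 1) →L[ℝ] ℝ, y ∈ ball (0 : E (m + 1)) 1 →
      HasFDerivAt (sphConv H (a j)) L y ∧ ∀ v, L v = sphConv (pd v H) (a j) y := fun j y => by
    obtain ⟨B, -, hB⟩ := (h.atom j).exists_bound h.A_pos
    by_cases hy : y ∈ ball (0 : E (m + 1)) 1
    · obtain ⟨L, hL⟩ := exists_hasFDerivAt_sphConv hH (h.meas j) hB hy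
      exact ⟨L, fun _ => hL⟩
    · exact ⟨0, fun h => absurd h hy⟩
  choose L hL using hex
  choose C hC hb using fun i : Fin (m + 1) => exists_abs_sphConv_le h.p_pos h.moments h.A_pos
    (contDiff_pd hH (EuclideanSpace.single i 1))
  have hbd : ∀ j y, y ∈ ball (0 : E (m + 1)) 1 → ‖lam j • L j y‖ ≤ |lam j| * ∑ i, C i :=
    fun j y hy => by
      rw [norm_smul]
      refine mul_le_mul_of_nonneg_left ((norm_clm_le_sum _).trans (Finset.sum_le_sum fun i _ => ?_))
        (norm_nonneg _)
      rw [(hL j y hy).2]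
      exact hb i _ (h.atom j) y hy
  have hu := h.summable.mul_right (∑ i, C i)
  refine ⟨∑' j, lam j • L j x, ?_, fun v => ?_⟩
  · exact hasFDerivAt_tsum_of_isPreconnected hu isOpen_ball (convex_ball 0 1).isPreconnected
      (fun j y hy => (hL j y hy).1.const_mul (lam j)) hbd hx (h.summable_sphConv hH hx) hx
  · have hs : Summable fun j => lam j • L j x :=
      Summable.of_norm_bounded hu fun j => hbd j x hx
    have := (ContinuousLinearMap.apply ℝ ℝ v).map_tsum hs
    simp only [ContinuousLinearMap.apply_apply] at this
    rw [this, atomSum]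
    refine tsum_congr fun j => ?_
    simp [(hL j x hx).2 v]

lemma AtomSeq.fderiv_apply (h : AtomSeq m p k A a lam) {H : E (m + 1) → ℝ}
    (hH : ContDiff ℝ ∞ H) {x : E (m + 1)} (hx : x ∈ ball (0 : E (m + 1)) 1) (v : E (m + 1)) :
    fderiv ℝ (atomSum lam a H) x v = atomSum lam a (pd v H) x := by
  obtain ⟨L, hL, hv⟩ := h.exists_hasFDerivAt hH hx
  rw [hL.fderiv, hv]

lemma AtomSeq.contDiffOn (h : AtomSeq m p k A a lam) (N : ℕ) : ∀ {H : E (m + 1) → ℝ},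
    ContDiff ℝ ∞ H → ContDiffOn ℝ N (atomSum lam a H) (ball (0 : E (m + 1)) 1) := by
  have hd : ∀ {H : E (m + 1) → ℝ}, ContDiff ℝ ∞ H →
      DifferentiableOn ℝ (atomSum lam a H) (ball (0 : E (m + 1)) 1) := fun hH x hx => by
    obtain ⟨L, hL, -⟩ := h.exists_hasFDerivAt hH hx
    exact hL.differentiableAt.differentiableWithinAt
  induction N with
  | zero => exact fun hH => contDiffOn_zero.2 (hd hH).continuousOn
  | succ N ih =>
    intro H hH
    have := contDiffOn_succ_of_fderiv_apply (𝕜 := ℝ) (n := (N : WithTop ℕ∞)) (hd hH)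
      (by simp) fun v => by
        refine (ih (contDiff_pd hH v)).congr fun x hx => ?_
        rw [fderivWithin_of_isOpen isOpen_ball hx, h.fderiv_apply hH hx]
    exact_mod_cast this

/-- A pointwise linear relation between smooth kernels on `x - S` passes to the series at `x`. -/
lemma AtomSeq.sum_eq_zero (h : AtomSeq m p k A a lam) {ι : Type*} (s : Finset ι)
    (c : ι → ℝ) (G : ι → E (m + 1) → ℝ) (hG : ∀ i ∈ s, ContDiff ℝ ∞ (G i))
    {x : E (m + 1)} (hx : x ∈ ball (0 : E (m + 1)) 1)
    (hz : ∀ ξ ∈ sphere (0 : E (m + 1)) 1, ∑ i ∈ s, c i * G i (x - ξ) = 0) :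
    ∑ i ∈ s, c i * atomSum lam a (G i) x = 0 := by
  have h1 : ∀ j, ∑ i ∈ s, c i * sphConv (G i) (a j) x = 0 := fun j => by
    obtain ⟨B, -, hB⟩ := (h.atom j).exists_bound h.A_pos
    simp only [sphConv, ← integral_const_mul]
    rw [← integral_finsetSum _ fun i hi =>
      (integrable_sphConv (hG i hi).continuous (h.meas j) hB hx).const_mul (c i)]
    rw [integral_congr_ae (g := fun _ => 0), integral_zero]
    filter_upwards [ae_mem_sphere m] with ξ hξ
    simp only [← mul_assoc, ← Finset.sum_mul, hz ξ hξ, zero_mul]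
  simp only [atomSum, ← tsum_mul_left]
  rw [← Summable.tsum_finsetSum fun i hi => (h.summable_sphConv (hG i hi) hx).mul_left (c i)]
  rw [← tsum_zero (α := ℝ) (β := ℕ)]
  refine tsum_congr fun j => ?_
  rw [← mul_zero (lam j), ← h1 j, Finset.mul_sum]
  exact Finset.sum_congr rfl fun i _ => by ring

end

/-! ### Smoothness and `H`-harmonicity of the sum -/

/-- The power `(1 - |y|²)^l` of the defining function of the ball. -/
def qpow {n : ℕ} (l : ℕ) (y : E n) : ℝ := (1 - ‖y‖ ^ 2) ^ l

lemma contDiff_qpow {n : ℕ} (l : ℕ) : ContDiff ℝ ∞ (qpow l : E n → ℝ) :=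
  (contDiff_const.sub (contDiff_norm_sq ℝ)).pow l

lemma fderiv_qpow {n : ℕ} (l : ℕ) (y v : E n) :
    fderiv ℝ (qpow (l + 1)) y v = -(2 * (l + 1) * inner ℝ y v * qpow l y) := by
  have h := ((hasStrictFDerivAt_norm_sq y).hasFDerivAt.const_sub 1).pow (l + 1)
  have : fderiv ℝ (qpow (l + 1)) y = _ := h.fderiv
  rw [this]
  simp [qpow]
  ring

lemma fderiv_hker {n : ℕ} (l : ℕ) {y : E n} (hy : y ≠ 0) (v : E n) :
    fderiv ℝ (hker l) y v = -(2 * l * inner ℝ y v * hker (l + 1) y) := by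
  have h0 : ‖y‖ ≠ 0 := norm_ne_zero_iff.2 hy
  have h := (hasDerivAt_inv (x := (‖y‖ ^ 2) ^ l) (by positivity)).comp_hasFDerivAt y
    ((hasStrictFDerivAt_norm_sq y).hasFDerivAt.pow l)
  have : fderiv ℝ (hker l) y = _ := h.fderiv
  rw [this]
  rcases l with _ | l
  · simp
  · simp [hker]
    field_simp
    ring

lemma pd_congr {n : ℕ} {G H : E n → ℝ} {y : E n} (h : G =ᶠ[𝓝 y] H) (v : E n) :
    pd v G y = pd v H y := by rw [pd, pd, h.fderiv_eq]

lemma pd_mul {n : ℕ} {f g : E n → ℝ} {y : E n} (hf : DifferentiableAt ℝ f y)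
    (hg : DifferentiableAt ℝ g y) (v : E n) :
    pd v (fun z => f z * g z) y = f y * pd v g y + pd v f y * g y := by
  simp only [pd]
  rw [fderiv_fun_mul hf hg]
  simp [mul_comm]

lemma pd_const_mul {n : ℕ} {f : E n → ℝ} {y : E n} (hf : DifferentiableAt ℝ f y) (c : ℝ)
    (v : E n) : pd v (fun z => c * f z) y = c * pd v f y := by
  simp only [pd]
  rw [fderiv_const_mul hf]
  simp

lemma pd_coord {n : ℕ} (i : Fin n) (y : E n) :
    pd (EuclideanSpace.single i 1) (fun z : E n => z i) y = 1 := by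
  have : (fun z : E n => z i) = (EuclideanSpace.proj i : E n →L[ℝ] ℝ) := rfl
  rw [pd, this, ContinuousLinearMap.fderiv]
  simp

lemma differentiableAt_coord {n : ℕ} (i : Fin n) (y : E n) :
    DifferentiableAt ℝ (fun z : E n => z i) y :=
  (EuclideanSpace.proj i : E n →L[ℝ] ℝ).differentiableAt

lemma pd_pd_hker {n : ℕ} (l : ℕ) {y : E n} (hy : y ≠ 0) (i : Fin n) :
    pd (EuclideanSpace.single i 1) (pd (EuclideanSpace.single i 1) (hker l)) y =
      -(2 * l) * hker (l + 1) y + 4 * l * (l + 1) * y i ^ 2 * hker (l + 2) y := by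
  have h1 : pd (EuclideanSpace.single i 1) (hker l) =ᶠ[𝓝 y]
      fun z : E n => -(2 * (l : ℝ)) * (z i * hker (l + 1) z) := by
    filter_upwards [isOpen_ne.mem_nhds hy] with z hz
    rw [pd, fderiv_hker l hz, EuclideanSpace.inner_single_right]
    simp
    ring
  have hd := (hker_contDiffAt (l + 1) hy).differentiableAt (by simp)
  rw [pd_congr h1, pd_const_mul ((differentiableAt_coord i y).fun_mul hd),
    pd_mul (differentiableAt_coord i y) hd, pd_coord, pd, fderiv_hker _ hy,
    EuclideanSpace.inner_single_right]
  simp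
  ring

lemma pd_pd_qpow {n : ℕ} (l : ℕ) (y : E n) (i : Fin n) :
    pd (EuclideanSpace.single i 1) (pd (EuclideanSpace.single i 1) (qpow (l + 2))) y =
      -(2 * (l + 2)) * qpow (l + 1) y + 4 * (l + 2) * (l + 1) * y i ^ 2 * qpow l y := by
  have h1 : pd (EuclideanSpace.single i 1) (qpow (l + 2)) =
      fun z : E n => -(2 * ((l : ℝ) + 2)) * (z i * qpow (l + 1) z) := by
    funext z
    rw [pd, fderiv_qpow, EuclideanSpace.inner_single_right]
    simp
    ring
  have hd : DifferentiableAt ℝ (qpow (l + 1)) y := (contDiff_qpow (l + 1)).differentiable (by simp) y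
  rw [h1, pd_const_mul ((differentiableAt_coord i y).fun_mul hd),
    pd_mul (differentiableAt_coord i y) hd, pd_coord, pd, fderiv_qpow,
    EuclideanSpace.inner_single_right]
  simp
  ring

lemma lap_eq {n : ℕ} (u : E n → ℝ) (x : E n) : lap n u x =
    ∑ i, pd (EuclideanSpace.single i 1) (pd (EuclideanSpace.single i 1) u) x := rfl

lemma Nder_eq {n : ℕ} (u : E n → ℝ) (x : E n) : Nder n u x = pd x u x := rfl

/-- The algebraic identity behind the `H`-harmonicity of the Poisson kernel, with the derivatives
of `(1-|x|²)^m` and of `|x-ξ|^{-2m}` inserted, `m = l + 2`. -/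
lemma kernel_identity (l : ℕ) {x ξ : E (l + 2 + 1)} (hx : x ∈ ball 0 1) (hξ : ξ ∈ sphere 0 1) :
    (1 - ‖x‖ ^ 2) ^ 2 * ∑ i, (qpow (l + 2) x *
          (-(2 * ((l + 2 : ℕ) : ℝ)) * hker (l + 2 + 1) (x - ξ) +
            4 * (l + 2 : ℕ) * ((l + 2 : ℕ) + 1) * (x - ξ) i ^ 2 * hker (l + 2 + 2) (x - ξ)) +
        2 * (-(2 * (l + 2) * x i * qpow (l + 1) x)) *
          (-(2 * ((l + 2 : ℕ) : ℝ) * (x - ξ) i * hker (l + 2 + 1) (x - ξ))) +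
        (-(2 * (l + 2)) * qpow (l + 1) x + 4 * (l + 2) * (l + 1) * x i ^ 2 * qpow l x) *
          hker (l + 2) (x - ξ)) +
      2 * (l + 1) * (1 - ‖x‖ ^ 2) * (qpow (l + 2) x *
          (-(2 * ((l + 2 : ℕ) : ℝ) * inner ℝ (x - ξ) x * hker (l + 2 + 1) (x - ξ))) +
        -(2 * (l + 2) * inner ℝ x x * qpow (l + 1) x) * hker (l + 2) (x - ξ)) = 0 := by
  have hxn : ‖x‖ < 1 := by simpa using hx
  have hd0 : 0 < ‖x - ξ‖ ^ 2 := by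
    have := one_sub_norm_le x hξ
    have : 0 < ‖x - ξ‖ := by linarith
    positivity
  have hξn : ‖ξ‖ = 1 := by simpa using hξ
  set y := x - ξ with hy
  have hT : 2 * inner ℝ y x = ‖y‖ ^ 2 - (1 - ‖x‖ ^ 2) := by
    have h1 := norm_sub_sq_real x y
    rw [show x - y = ξ by rw [hy]; abel, hξn, real_inner_comm] at h1
    linarith
  have hTs : ∑ i, x i * y i = inner ℝ y x := by
    simp [PiLp.inner_apply]
  have hRs : ∑ i, x i ^ 2 = ‖x‖ ^ 2 := by rw [EuclideanSpace.real_norm_sq_eq]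
  have hds : ∑ i, y i ^ 2 = ‖y‖ ^ 2 := by rw [EuclideanSpace.real_norm_sq_eq]
  set d := ‖y‖ ^ 2 with hd
  set T : ℝ := inner ℝ y x with hTdef
  have hsum : ∀ c0 c1 c2 c3 : ℝ, ∑ i, (c0 + c1 * y i ^ 2 + c2 * (x i * y i) + c3 * x i ^ 2) =
      (l + 3) * c0 + c1 * d + c2 * T + c3 * ‖x‖ ^ 2 := fun c0 c1 c2 c3 => by
    simp only [Finset.sum_add_distrib, ← Finset.mul_sum, hds, hTs, hRs, Finset.sum_const,
      Finset.card_univ, Fintype.card_fin, nsmul_eq_mul]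
    push_cast
    ring
  have hs := hsum
    (qpow (l + 2) x * (-(2 * ((l : ℝ) + 2)) * hker (l + 2 + 1) y) +
      -(2 * (l + 2)) * qpow (l + 1) x * hker (l + 2) y)
    (qpow (l + 2) x * (4 * (l + 2) * (l + 3) * hker (l + 2 + 2) y))
    (8 * (l + 2) * (l + 2) * qpow (l + 1) x * hker (l + 2 + 1) y)
    (4 * (l + 2) * (l + 1) * qpow l x * hker (l + 2) y)
  rw [Finset.sum_congr rfl (g := fun i => _) (fun i _ => ?_), hs]
  · rw [real_inner_self_eq_norm_sq]
    have hk : ∀ j, hker j y = (d ^ j)⁻¹ := fun j => rfl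
    have hT' : T = (d - (1 - ‖x‖ ^ 2)) / 2 := by linarith
    simp only [qpow, hk, hT']
    generalize ‖x‖ ^ 2 = R
    push_cast
    field_simp
    ring
  · push_cast
    ring

section
variable {m : ℕ} {p : ℝ} {k : ℕ} {A : ℝ} {a : ℕ → E (m + 1) → ℝ} {lam : ℕ → ℝ}

lemma PhInt_eq_sphConv {ρ : ℝ} {H : E (m + 1) → ℝ}
    (hHe : ∀ y, 1 - ρ < ‖y‖ → H y = hker m y) (b : E (m + 1) → ℝ)
    {x : E (m + 1)} (hx : x ∈ ball (0 : E (m + 1)) ρ) :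
    PhInt (m + 1) b x = qpow m x * sphConv H b x := by
  rw [PhInt, sphConv, ← integral_const_mul]
  refine integral_congr_ae ?_
  filter_upwards [ae_mem_sphere m] with ξ hξ
  have := one_sub_norm_le x hξ
  have hx' : ‖x‖ < ρ := by simpa using hx
  rw [Ph_eq, hHe _ (by linarith), qpow, mul_assoc]

lemma tsum_PhInt_eq {ρ : ℝ} {H : E (m + 1) → ℝ}
    (hHe : ∀ y, 1 - ρ < ‖y‖ → H y = hker m y)
    {x : E (m + 1)} (hx : x ∈ ball (0 : E (m + 1)) ρ) :
    ∑' j, lam j * PhInt (m + 1) (a j) x = qpow m x * atomSum lam a H x := by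
  rw [atomSum, ← tsum_mul_left]
  refine tsum_congr fun j => ?_
  rw [PhInt_eq_sphConv hHe _ hx]
  ring

lemma exists_radius {n : ℕ} {x : E n} (hx : x ∈ ball (0 : E n) 1) :
    ∃ ρ < 1, x ∈ ball (0 : E n) ρ := by
  have hx' : ‖x‖ < 1 := by simpa using hx
  obtain ⟨ρ, h1, h2⟩ := exists_between hx'
  exact ⟨ρ, h2, by simpa using h1⟩

lemma AtomSeq.contDiffOn_tsum (h : AtomSeq m p k A a lam) :
    ContDiffOn ℝ 2 (fun x => ∑' j, lam j * PhInt (m + 1) (a j) x) (ball (0 : E (m + 1)) 1) := by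
  intro x hx
  obtain ⟨ρ, hρ, hxρ⟩ := exists_radius hx
  obtain ⟨H, hH, hHe⟩ := exists_smooth_hker m (sub_pos.2 hρ)
  have h1 : ContDiffAt ℝ 2 (fun y => qpow m y * atomSum lam a H y) x :=
    (contDiff_infty.1 (contDiff_qpow m) 2).contDiffAt.mul
      ((h.contDiffOn 2 hH).contDiffAt (isOpen_ball.mem_nhds hx))
  refine (h1.congr_of_eventuallyEq ?_).contDiffWithinAt
  filter_upwards [isOpen_ball.mem_nhds hxρ] with y hy
  exact tsum_PhInt_eq hHe hy

lemma AtomSeq.hHarmonic {l : ℕ} {a : ℕ → E (l + 2 + 1) → ℝ} (h : AtomSeq (l + 2) p k A a lam) :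
    HHarmonic (l + 2 + 1) (fun x => ∑' j, lam j * PhInt (l + 2 + 1) (a j) x) := by
  intro x hx
  obtain ⟨ρ, hρ, hxρ⟩ := exists_radius hx
  obtain ⟨H, hH, hHe⟩ := exists_smooth_hker (l + 2) (sub_pos.2 hρ)
  set u : E (l + 2 + 1) → ℝ := fun x => ∑' j, lam j * PhInt (l + 2 + 1) (a j) x with hu
  have hball : ball (0 : E (l + 2 + 1)) ρ ⊆ ball 0 1 := ball_subset_ball hρ.le
  have hdiff : ∀ {G : E (l + 2 + 1) → ℝ}, ContDiff ℝ ∞ G → ∀ y ∈ ball (0 : E (l + 2 + 1)) 1,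
      DifferentiableAt ℝ (atomSum lam a G) y := fun hG y hy => by
    obtain ⟨L, hL, -⟩ := h.exists_hasFDerivAt hG hy
    exact hL.differentiableAt
  have hq : ∀ j (y : E (l + 2 + 1)), DifferentiableAt ℝ (qpow j) y := fun j y =>
    (contDiff_qpow j).differentiable (by simp) y
  have hu1 : ∀ y ∈ ball (0 : E (l + 2 + 1)) ρ, ∀ v, pd v u y =
      qpow (l + 2) y * atomSum lam a (pd v H) y + pd v (qpow (l + 2)) y * atomSum lam a H y :=
    fun y hy v => by
      have he : u =ᶠ[𝓝 y] fun z => qpow (l + 2) z * atomSum lam a H z := by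
        filter_upwards [isOpen_ball.mem_nhds hy] with z hz
        exact tsum_PhInt_eq hHe hz
      rw [pd_congr he, pd_mul (hq _ y) (hdiff hH y (hball hy))]
      rw [show pd v (atomSum lam a H) y = _ from h.fderiv_apply hH (hball hy) v]
  have hu2 : ∀ i, pd (EuclideanSpace.single i 1) (pd (EuclideanSpace.single i 1) u) x =
      qpow (l + 2) x *
          atomSum lam a (pd (EuclideanSpace.single i 1) (pd (EuclideanSpace.single i 1) H)) x +
        2 * pd (EuclideanSpace.single i 1) (qpow (l + 2)) x *
          atomSum lam a (pd (EuclideanSpace.single i 1) H) x +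
        pd (EuclideanSpace.single i 1) (pd (EuclideanSpace.single i 1) (qpow (l + 2))) x *
          atomSum lam a H x := fun i => by
    set e : E (l + 2 + 1) := EuclideanSpace.single i 1
    have he : pd e u =ᶠ[𝓝 x] (fun y => qpow (l + 2) y * atomSum lam a (pd e H) y) +
        fun y => pd e (qpow (l + 2)) y * atomSum lam a H y := by
      filter_upwards [isOpen_ball.mem_nhds hxρ] with y hy
      exact hu1 y hy e
    have hqe : DifferentiableAt ℝ (pd e (qpow (l + 2))) x :=
      (contDiff_pd (contDiff_qpow (l + 2)) e).differentiable (by simp) x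
    have hHe' := contDiff_pd hH e
    rw [pd_congr he, pd, fderiv_add ((hq _ x).fun_mul (hdiff hHe' x hx)) (hqe.fun_mul (hdiff hH x hx)),
      add_apply]
    have e1 := pd_mul (hq (l + 2) x) (hdiff hHe' x hx) e
    have e2 := pd_mul hqe (hdiff hH x hx) e
    rw [show pd e (atomSum lam a (pd e H)) x = _ from h.fderiv_apply hHe' hx e] at e1
    rw [show pd e (atomSum lam a H) x = _ from h.fderiv_apply hH hx e] at e2
    rw [pd] at e1 e2
    rw [e1, e2]
    ring
  rw [lap_eq, Nder_eq, hu1 x hxρ, Finset.sum_congr rfl fun i _ => hu2 i]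
  -- The expression is the series attached to a combination of derivatives of `H`, and that
  -- combination vanishes on `x - S` by `kernel_identity`.
  have key := h.sum_eq_zero Finset.univ
    (Sum.elim (Sum.elim
        (fun _ : Fin (l + 2 + 1) => (1 - ‖x‖ ^ 2) ^ 2 * qpow (l + 2) x)
        (fun i : Fin (l + 2 + 1) => (1 - ‖x‖ ^ 2) ^ 2 *
          (2 * pd (EuclideanSpace.single i 1) (qpow (l + 2)) x)))
      (Sum.elim
        (fun _ : Unit => 2 * (l + 1) * (1 - ‖x‖ ^ 2) * qpow (l + 2) x)
        (fun _ : Unit => (1 - ‖x‖ ^ 2) ^ 2 * ∑ i : Fin (l + 2 + 1),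
            pd (EuclideanSpace.single i 1) (pd (EuclideanSpace.single i 1) (qpow (l + 2))) x +
          2 * (l + 1) * (1 - ‖x‖ ^ 2) * pd x (qpow (l + 2)) x)))
    (Sum.elim (Sum.elim
        (fun i => pd (EuclideanSpace.single i 1) (pd (EuclideanSpace.single i 1) H))
        (fun i => pd (EuclideanSpace.single i 1) H))
      (Sum.elim (fun _ => pd x H) (fun _ => H)))
    (by
      rintro ((i | i) | (i | i)) -
      · exact contDiff_pd (contDiff_pd hH _) _
      · exact contDiff_pd hH _
      · exact contDiff_pd hH _
      · exact hH) hx ?_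
  · simp only [Fintype.sum_sum_type, Sum.elim_inl, Sum.elim_inr, Finset.univ_unique,
      Finset.sum_singleton] at key
    rw [← key]
    simp only [Finset.sum_add_distrib, mul_add, add_mul, Finset.mul_sum, Finset.sum_mul]
    push_cast
    simp only [mul_assoc]
    ring
  · intro ξ hξ
    have hyd : 1 - ρ < ‖x - ξ‖ := by
      have := one_sub_norm_le x hξ
      have hx' : ‖x‖ < ρ := by simpa using hxρ
      linarith
    have hy0 : x - ξ ≠ 0 := norm_pos_iff.1 ((sub_pos.2 hρ).trans hyd)
    have hev : H =ᶠ[𝓝 (x - ξ)] hker (l + 2) := by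
      filter_upwards [(isOpen_lt continuous_const continuous_norm).mem_nhds hyd] with y hy
      exact hHe y hy
    have hpd : ∀ v, pd v H =ᶠ[𝓝 (x - ξ)] pd v (hker (l + 2)) := fun v => by
      filter_upwards [hev.eventuallyEq_nhds] with y hy
      exact pd_congr hy v
    simp only [Fintype.sum_sum_type, Sum.elim_inl, Sum.elim_inr, Finset.univ_unique,
      Finset.sum_singleton]
    have key := kernel_identity l hx hξ
    rw [← key, hHe _ hyd, (hpd x).eq_of_nhds]
    simp only [pd_congr (hpd _), (hpd _).eq_of_nhds, pd_pd_hker (l + 2) hy0, pd_pd_qpow]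
    simp only [pd, fderiv_hker (l + 2) hy0, fderiv_qpow, EuclideanSpace.inner_single_right]
    rw [add_mul, Finset.mul_sum, Finset.mul_sum, Finset.sum_mul]
    rw [show ∀ a b c d e : ℝ, a + b + (c + (d + e)) = (a + b + d) + (c + e) by intros; ring,
      ← Finset.sum_add_distrib, ← Finset.sum_add_distrib]
    congr 1
    · refine Finset.sum_congr rfl fun i _ => ?_
      push_cast
      simp only [conj_trivial]
      ring
    · push_cast
      ring

end

/-! ### Uniform convergence and the maximal function of the sum -/

/-- Countable subadditivity of `x ↦ x ^ p` for `0 < p ≤ 1`. -/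
lemma tsum_rpow_le {p : ℝ} (hp0 : 0 < p) (hp1 : p ≤ 1) (f : ℕ → ℝ≥0∞) :
    (∑' j, f j) ^ p ≤ ∑' j, f j ^ p := by
  rw [← ENNReal.le_rpow_inv_iff hp0, ENNReal.tsum_eq_iSup_sum]
  refine iSup_le fun s => ?_
  rw [ENNReal.le_rpow_inv_iff hp0]
  refine le_trans ?_ (ENNReal.sum_le_tsum s)
  induction s using Finset.cons_induction with
  | empty => simp [hp0]
  | cons i s hi ih =>
    rw [Finset.sum_cons, Finset.sum_cons]
    exact (ENNReal.rpow_add_le_add_rpow _ _ hp0.le hp1).trans (add_le_add le_rfl ih)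

lemma summable_of_rpow {p : ℝ} (hp0 : 0 < p) (hp1 : p ≤ 1) {lam : ℕ → ℝ}
    (h : Summable fun j => |lam j| ^ p) : Summable fun j => |lam j| := by
  refine Summable.of_norm_bounded_eventually_nat h ?_
  filter_upwards [h.tendsto_atTop_zero.eventually (ge_mem_nhds one_pos)] with j hj
  have h1 : |lam j| ≤ 1 := by
    by_contra! hc
    exact absurd hj (not_le.2 (Real.one_lt_rpow hc hp0))
  rw [Real.norm_of_nonneg (abs_nonneg _)]
  exact Real.self_le_rpow_of_le_one (abs_nonneg _) h1 hp1

section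
variable {m : ℕ} {p : ℝ} {k : ℕ} {A : ℝ} {a : ℕ → E (m + 1) → ℝ} {lam : ℕ → ℝ}

lemma AtomSeq.tendstoUniformlyOn (h : AtomSeq m p k A a lam) {K : Set (E (m + 1))}
    (hK : K ⊆ ball (0 : E (m + 1)) 1) (hKc : IsCompact K) :
    TendstoUniformlyOn
      (fun (N : ℕ) (x : E (m + 1)) => ∑ j ∈ Finset.range N, lam j * PhInt (m + 1) (a j) x)
      (fun x => ∑' j : ℕ, lam j * PhInt (m + 1) (a j) x) atTop K := by
  obtain ⟨ρ, hρ, hKρ⟩ : ∃ ρ < 1, K ⊆ ball (0 : E (m + 1)) ρ := by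
    rcases K.eq_empty_or_nonempty with rfl | hne
    · exact ⟨0, one_pos, empty_subset _⟩
    obtain ⟨y, hy, hmax⟩ := hKc.exists_isMaxOn hne continuous_norm.continuousOn
    obtain ⟨ρ, hρ, hyρ⟩ := exists_radius (hK hy)
    refine ⟨ρ, hρ, fun x hx => ?_⟩
    rw [mem_ball_zero_iff] at hyρ ⊢
    exact lt_of_le_of_lt (hmax hx) hyρ
  obtain ⟨H, hH, hHe⟩ := exists_smooth_hker m (sub_pos.2 hρ)
  obtain ⟨C, hC, hb⟩ := exists_abs_sphConv_le h.p_pos h.moments h.A_pos hH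
  refine tendstoUniformlyOn_tsum_nat (h.summable.mul_right C) fun j x hx => ?_
  have hx1 : ‖x‖ < 1 := by simpa using hK hx
  have hq0 : 0 ≤ 1 - ‖x‖ ^ 2 := by nlinarith [norm_nonneg x]
  have hq : |qpow m x| ≤ 1 := by
    rw [qpow, abs_of_nonneg (by positivity)]
    exact pow_le_one₀ hq0 (by nlinarith [norm_nonneg x])
  rw [PhInt_eq_sphConv hHe _ (hKρ hx), norm_mul, norm_mul]
  refine mul_le_mul_of_nonneg_left ?_ (norm_nonneg _)
  exact (mul_le_mul hq (hb _ (h.atom j) x (hK hx)) (abs_nonneg _) zero_le_one).trans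
    (one_mul C).le

end

lemma radMax_tsum_rpow_le {n : ℕ} {p : ℝ} (hp0 : 0 < p) (hp1 : p ≤ 1) (lam : ℕ → ℝ)
    (v : ℕ → E n → ℝ) (ζ : E n) :
    radMax n (fun x => ∑' j, lam j * v j x) ζ ^ p ≤
      ∑' j, ENNReal.ofReal (|lam j| ^ p) * radMax n (v j) ζ ^ p := by
  have h1 : radMax n (fun x => ∑' j, lam j * v j x) ζ ≤
      ∑' j, ENNReal.ofReal |lam j| * radMax n (v j) ζ := by
    refine iSup₂_le fun t ht => ?_
    refine (enorm_tsum_le_tsum_enorm (f := fun j => lam j * v j (t • ζ))).trans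
      (ENNReal.tsum_le_tsum fun j => ?_)
    rw [enorm_mul, Real.enorm_eq_ofReal_abs (lam j)]
    gcongr
    exact le_iSup₂_of_le (f := fun t (_ : t ∈ Ioo (0 : ℝ) 1) => (‖v j (t • ζ)‖₊ : ℝ≥0∞)) t ht le_rfl
  refine (ENNReal.rpow_le_rpow h1 hp0.le).trans ((tsum_rpow_le hp0 hp1 _).trans (le_of_eq ?_))
  refine tsum_congr fun j => ?_
  rw [ENNReal.mul_rpow_of_nonneg _ _ hp0.le, ENNReal.ofReal_rpow_of_nonneg (abs_nonneg _) hp0.le]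

/-- For `0 < p ≤ 1`, atoms `(a_j)` and coefficients `(λ_j)` with
`Σ|λ_j|^p < ∞`, the series `Σ λ_j P_h[a_j]` converges uniformly on compact subsets of `B_n`
to an `H`-harmonic function `u` with `‖M[u]‖_{L^p}^p ≤ C_p^p Σ|λ_j|^p`, `C_p = C(n,p)`. -/
theorem stmt18 (n : ℕ) (hn : 3 ≤ n) (p : ℝ) (hp0 : 0 < p) (hp1 : p ≤ 1)
    (k : ℕ) (hk : ((n : ℝ) - 1) * (1 / p - 1) < (k : ℝ)) :
    ∃ C : ℝ, 0 < C ∧ ∀ (a : ℕ → E n → ℝ) (lam : ℕ → ℝ),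
      (∀ j : ℕ, IsPAtom n p k (a j)) → Summable (fun j : ℕ => |lam j| ^ p) →
      (∀ K : Set (E n), K ⊆ ball (0 : E n) 1 → IsCompact K →
        TendstoUniformlyOn
          (fun (m : ℕ) (x : E n) => ∑ j ∈ Finset.range m, lam j * PhInt n (a j) x)
          (fun x => ∑' j : ℕ, lam j * PhInt n (a j) x) atTop K) ∧
      ContDiffOn ℝ 2 (fun x => ∑' j : ℕ, lam j * PhInt n (a j) x) (ball (0 : E n) 1) ∧
      HHarmonic n (fun x => ∑' j : ℕ, lam j * PhInt n (a j) x) ∧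
      (∫⁻ ζ, radMax n (fun x => ∑' j : ℕ, lam j * PhInt n (a j) x) ζ ^ p ∂(sphMeasure n)) ≤
        ENNReal.ofReal (C ^ p * ∑' j : ℕ, |lam j| ^ p) := by
  obtain ⟨l, rfl⟩ : ∃ l, n = l + 2 + 1 := ⟨n - 3, by omega⟩
  have hk' : ((l + 2 : ℕ) : ℝ) * (1 / p - 1) < k := by
    convert hk using 2
    push_cast
    ring
  obtain ⟨A, hA, hatom⟩ := exists_atomAlt (l + 2) p hp0 hp1 k
  obtain ⟨C, hC, hmaj⟩ := exists_radMax_majorant (l + 2) (by omega) p hp0 k hk' A hA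
  refine ⟨C ^ (1 / p), by positivity, fun a lam ha hlam => ?_⟩
  have h : AtomSeq (l + 2) p k A a lam :=
    ⟨hp0, hk', hA, fun j => (ha j).1, fun j => hatom _ (ha j), summable_of_rpow hp0 hp1 hlam⟩
  refine ⟨fun K hK hKc => h.tendstoUniformlyOn hK hKc, h.contDiffOn_tsum, h.hHarmonic, ?_⟩
  choose G hGm hG hGi using fun j => hmaj (a j) (h.atom j)
  calc _ ≤ ∫⁻ ζ, ∑' j, ENNReal.ofReal (|lam j| ^ p) * G j ζ ∂(sphMeasure (l + 2 + 1)) := by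
        refine lintegral_mono_ae ?_
        filter_upwards [ae_mem_sphere (l + 2)] with ζ hζ
        refine (radMax_tsum_rpow_le hp0 hp1 lam _ ζ).trans (ENNReal.tsum_le_tsum fun j => ?_)
        gcongr
        exact hG j ζ hζ
    _ = ∑' j, ENNReal.ofReal (|lam j| ^ p) * ∫⁻ ζ, G j ζ ∂(sphMeasure (l + 2 + 1)) := by
        rw [lintegral_tsum fun j => ((hGm j).const_mul _).aemeasurable]
        exact tsum_congr fun j => lintegral_const_mul _ (hGm j)
    _ ≤ ∑' j, ENNReal.ofReal (|lam j| ^ p) * ENNReal.ofReal C :=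
        ENNReal.tsum_le_tsum fun j => by gcongr; exact hGi j
    _ = _ := by
        rw [ENNReal.tsum_mul_right, ← ENNReal.ofReal_tsum_of_nonneg (fun j => by positivity) hlam,
          ← Real.rpow_mul hC.le, one_div_mul_cancel hp0.ne', Real.rpow_one, mul_comm C,
          ENNReal.ofReal_mul (tsum_nonneg fun j => by positivity)]
end
end
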